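/- arXiv:2206.04405 — 8 statements merged into one kernel-verified Lean document; each statement's English description precedes it below -/
import Mathlib

section
/- Let (X_1,Y_1),…,(X_n,Y_n) be i.i.d. with law P^b and let (X,Y) ∼ P^* be independent of them. Build the weighted conformal set Ĉ_n using the exact weight function v = w = dP^*/dP^b. Then ℙ(Y ∈ Ĉ_n(X)) ≥ 1 − α, where the probability is taken jointly over the calibration sample (X_1,Y_1),…,(X_n,Y_n) ∼ (P^b)^{⊗n} and the independent test point (X,Y) ∼ P^*. -/
/-!
Write `P* = w · P^b`, so that the pair (calibration sample, test point) has density `w (a 0)` with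
respect to the law `(P^b)^{⊗(n+1)}` of an exchangeable tuple `a`, whose entry `a 0` is the test
point. Call an index `k` of a tuple *bad* if the entries with score strictly below that of `a k`
carry at least a fraction `1 - α` of the total weight `W = ∑ i, w (a i)`; failure of coverage
forces the index `0` to be bad (`coe_le_wQuantile_of_notMem`).

For every fixed tuple the bad indices carry weight at most `α W` (`sum_bad_le`): the bad index of
least score has weight at least `(1 - α) W` strictly below it, and none of that weight is bad.
By exchangeability (`lintegral_indicator_badSet_eq`), `∫ w (a k) 1[k bad]` does not depend on `k`,
so summing over the `n + 1` indices gives `(n + 1) ℙ(0 bad) ≤ α ∫ W = α (n + 1)`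
(`lintegral_indicator_badSet_le`).
-/

open MeasureTheory

/-- The weighted `(1-α)`-quantile of the non-conformity scores `s (z i)` with weight
function `v`, evaluated at the candidate test point `ζ`; it is `+∞` (in `EReal`) if the
weighted empirical CDF never reaches `1 - α`. -/
noncomputable def wQuantile {Z : Type*} {n : ℕ} (z : Fin n → Z)
    (s : Z → ℝ) (v : Z → ℝ) (α : ℝ) (ζ : Z) : EReal :=
  sInf {t : EReal | ∃ u : ℝ, t = (u : EReal) ∧
    1 - α ≤ ∑ i ∈ Finset.univ.filter (fun i => s (z i) ≤ u),
      v (z i) / ((∑ j, v (z j)) + v ζ)}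

/-- The weighted conformal prediction set `Ĉ_n(x)` built from calibration points `z`,
score `s`, weight function `v` and level `α`. -/
noncomputable def conformalSet {𝒳 𝒴 : Type*} {n : ℕ} (z : Fin n → 𝒳 × 𝒴)
    (s : 𝒳 × 𝒴 → ℝ) (v : 𝒳 × 𝒴 → ℝ) (α : ℝ) (x : 𝒳) : Set 𝒴 :=
  {y | (s (x, y) : EReal) ≤ wQuantile z s v α (x, y)}

open scoped ENNReal

/-- The tuples `a` in which index `k` is bad: the entries scoring strictly below `a k` carry at
least a fraction `1 - α` of the total weight. The condition is written without division, so that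
for nonnegative `w` every index is bad when the total weight vanishes. -/
def badSet {Z ι : Type*} [Fintype ι] (s w : Z → ℝ) (α : ℝ) (k : ι) : Set (ι → Z) :=
  {a | (1 - α) * ∑ i, w (a i) ≤ ∑ i, if s (a i) < s (a k) then w (a i) else 0}

lemma measurableSet_badSet {Z ι : Type*} [Fintype ι] [MeasurableSpace Z] {s w : Z → ℝ}
    (hs : Measurable s) (hwm : Measurable w) (α : ℝ) (k : ι) :
    MeasurableSet (badSet s w α k) := by
  refine measurableSet_le (by fun_prop) (Finset.measurable_sum _ fun i _ => ?_)
  exact Measurable.ite (measurableSet_lt (by fun_prop) (by fun_prop)) (by fun_prop) (by fun_prop)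

open Classical in
/-- In any fixed tuple, the bad indices carry at most a fraction `α` of the total weight. -/
lemma sum_bad_le {Z ι : Type*} [Fintype ι] {s w : Z → ℝ} (hw0 : ∀ ζ, 0 ≤ w ζ)
    {α : ℝ} (hα : 0 ≤ α) (a : ι → Z) :
    ∑ k, (if a ∈ badSet s w α k then w (a k) else 0) ≤ α * ∑ i, w (a i) := by
  by_cases hne : (Finset.univ.filter fun k => a ∈ badSet s w α k).Nonempty
  · obtain ⟨k, hk, hmin⟩ := Finset.exists_min_image _ (fun k => s (a k)) hne
    have hk' : (1 - α) * ∑ i, w (a i) ≤ ∑ i, if s (a i) < s (a k) then w (a i) else 0 := by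
      exact (Finset.mem_filter.1 hk).2
    -- A bad index scores at least as high as `k`, so it is not counted among those below `k`.
    have hle : ∑ j, ((if a ∈ badSet s w α j then w (a j) else 0) +
        if s (a j) < s (a k) then w (a j) else 0) ≤ ∑ j, w (a j) := by
      refine Finset.sum_le_sum fun j _ => ?_
      by_cases hj : a ∈ badSet s w α j
      · have := hmin j (by simpa using hj)
        simp [hj, not_lt.2 this]
      · have := hw0 (a j)
        by_cases h : s (a j) < s (a k) <;> simp [hj, h, this]
    rw [Finset.sum_add_distrib] at hle
    linarith
  · have h0 : ∀ k, a ∉ badSet s w α k := by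
      intro k hk
      exact hne ⟨k, by simpa using hk⟩
    simpa [h0] using mul_nonneg hα (Finset.sum_nonneg fun i _ => hw0 (a i))

/-- Exchangeability: the `w`-weighted probability that an index is bad is the same for all
indices. -/
lemma lintegral_indicator_badSet_eq {Z ι : Type*} [Fintype ι] [MeasurableSpace Z]
    (P : Measure Z) [IsProbabilityMeasure P] (s w : Z → ℝ) (α : ℝ) (k l : ι) :
    ∫⁻ a, (badSet s w α k).indicator (fun a => ENNReal.ofReal (w (a k))) a
        ∂(Measure.pi fun _ : ι => P) =
      ∫⁻ a, (badSet s w α l).indicator (fun a => ENNReal.ofReal (w (a l))) a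
        ∂(Measure.pi fun _ : ι => P) := by
  classical
  have hmp := measurePreserving_piCongrLeft (fun _ : ι => P) (Equiv.swap k l)
  rw [← hmp.lintegral_comp_emb (MeasurableEquiv.measurableEmbedding _)]
  refine lintegral_congr fun a => ?_
  have hT : ∀ i, (MeasurableEquiv.piCongrLeft (fun _ : ι => Z) (Equiv.swap k l)) a i =
      a (Equiv.swap k l i) := by
    intro i
    have := Equiv.piCongrLeft_apply_apply (fun _ : ι => Z) (Equiv.swap k l) a (Equiv.swap k l i)
    simpa [MeasurableEquiv.coe_piCongrLeft] using this
  have h1 : ∑ i, w (a (Equiv.swap k l i)) = ∑ i, w (a i) :=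
    Equiv.sum_comp (Equiv.swap k l) fun i => w (a i)
  have h2 : (∑ i, if s (a (Equiv.swap k l i)) < s (a l) then w (a (Equiv.swap k l i)) else 0) =
      ∑ i, if s (a i) < s (a l) then w (a i) else 0 :=
    Equiv.sum_comp (Equiv.swap k l) fun i => if s (a i) < s (a l) then w (a i) else 0
  simp only [Set.indicator_apply, badSet, Set.mem_ofPred_eq, hT, Equiv.swap_apply_left, h1, h2]

lemma lintegral_indicator_badSet_le {Z ι : Type*} [Fintype ι] [MeasurableSpace Z]
    (P : Measure Z) [IsProbabilityMeasure P] {s w : Z → ℝ} (hs : Measurable s)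
    (hwm : Measurable w) (hw0 : ∀ ζ, 0 ≤ w ζ) (hw1 : ∫⁻ ζ, ENNReal.ofReal (w ζ) ∂P = 1)
    {α : ℝ} (hα : 0 ≤ α) (l : ι) :
    ∫⁻ a, (badSet s w α l).indicator (fun a => ENNReal.ofReal (w (a l))) a
        ∂(Measure.pi fun _ : ι => P) ≤ ENNReal.ofReal α := by
  classical
  set I := ∫⁻ a, (badSet s w α l).indicator (fun a => ENNReal.ofReal (w (a l))) a
        ∂(Measure.pi fun _ : ι => P) with hI
  have hcoord : ∀ k : ι, ∫⁻ a, ENNReal.ofReal (w (a k)) ∂(Measure.pi fun _ : ι => P) = 1 := by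
    intro k
    rw [← hw1, ← (measurePreserving_eval (fun _ : ι => P) k).lintegral_comp
      hwm.ennreal_ofReal]
  have key : (Fintype.card ι : ℝ≥0∞) * I ≤ (Fintype.card ι : ℝ≥0∞) * ENNReal.ofReal α := by
    calc (Fintype.card ι : ℝ≥0∞) * I
        = ∑ k : ι, ∫⁻ a, (badSet s w α k).indicator (fun a => ENNReal.ofReal (w (a k))) a
            ∂(Measure.pi fun _ : ι => P) := by
          rw [Finset.sum_congr rfl fun k _ => lintegral_indicator_badSet_eq P s w α k l]
          simp [hI]
      _ = ∫⁻ a, ∑ k : ι, (badSet s w α k).indicator (fun a => ENNReal.ofReal (w (a k))) a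
            ∂(Measure.pi fun _ : ι => P) := by
          rw [lintegral_finsetSum]
          intro k _
          exact Measurable.indicator (by fun_prop) (measurableSet_badSet hs hwm α k)
      _ ≤ ∫⁻ a, ENNReal.ofReal α * ∑ k : ι, ENNReal.ofReal (w (a k))
            ∂(Measure.pi fun _ : ι => P) := by
          refine lintegral_mono fun a => ?_
          have h := ENNReal.ofReal_le_ofReal (sum_bad_le (s := s) hw0 hα a)
          rw [ENNReal.ofReal_mul hα, ENNReal.ofReal_sum_of_nonneg fun i _ => hw0 _,
            ENNReal.ofReal_sum_of_nonneg] at h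
          · refine le_trans (le_of_eq ?_) h
            refine Finset.sum_congr rfl fun k _ => ?_
            by_cases hk : a ∈ badSet s w α k <;> simp [hk]
          · intro i _
            split_ifs
            exacts [hw0 _, le_rfl]
      _ = (Fintype.card ι : ℝ≥0∞) * ENNReal.ofReal α := by
          rw [lintegral_const_mul _ (by fun_prop), lintegral_finsetSum _ fun k _ => by fun_prop]
          simp [hcoord, mul_comm]
  have hc : (Fintype.card ι : ℝ≥0∞) ≠ 0 := by
    have : Nonempty ι := ⟨l⟩
    exact_mod_cast Fintype.card_ne_zero
  exact (ENNReal.mul_le_mul_iff_right hc (ENNReal.natCast_ne_top _)).1 key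

/-- The test point is covered unless its index is bad in the tuple `ζ, z 0, …, z (n - 1)`. -/
lemma coe_le_wQuantile_of_notMem {Z : Type*} {n : ℕ} {s w : Z → ℝ} (hw0 : ∀ ζ, 0 ≤ w ζ)
    {α : ℝ} (hα : α < 1) (z : Fin n → Z) (ζ : Z)
    (h : (Fin.cons ζ z : Fin (n + 1) → Z) ∉ badSet s w α 0) :
    (s ζ : EReal) ≤ wQuantile z s w α ζ := by
  refine le_sInf ?_
  rintro _ ⟨u, rfl, hu⟩
  by_contra! hlt
  rw [EReal.coe_lt_coe_iff] at hlt
  apply h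
  simp only [badSet, Set.mem_ofPred_eq, Fin.sum_univ_succ, Fin.cons_zero, Fin.cons_succ,
    lt_irrefl, if_false, zero_add]
  rw [← Finset.sum_div, Finset.sum_filter] at hu
  -- Zero total weight is excluded: the quotient would be `0`, hence less than `1 - α`.
  have hW : 0 < (∑ j, w (z j)) + w ζ := by
    refine lt_of_le_of_ne
      (add_nonneg (Finset.sum_nonneg fun j _ => hw0 (z j)) (hw0 ζ)) fun h0 => ?_
    rw [← h0, div_zero] at hu
    linarith
  rw [le_div_iff₀ hW, add_comm] at hu
  refine hu.trans (Finset.sum_le_sum fun i _ => ?_)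
  by_cases hi : s (z i) ≤ u
  · simp [hi, hi.trans_lt hlt]
  · simp only [hi, if_false]
    split_ifs
    exacts [hw0 _, le_rfl]

/-- Marginal coverage of weighted conformal prediction with exact weights
`w = dP^*/dP^b` : with calibration data i.i.d. from `P^b` and an independent test point
from `P^*`, we have `ℙ(Y ∈ Ĉ_n(X)) ≥ 1 - α`. -/
theorem weighted_conformal_coverage_exact_weights
    {𝒳 𝒴 : Type*} [MeasurableSpace 𝒳] [MeasurableSpace 𝒴]
    [StandardBorelSpace 𝒳] [StandardBorelSpace 𝒴]
    (Pb Ps : Measure (𝒳 × 𝒴)) [IsProbabilityMeasure Pb] [IsProbabilityMeasure Ps]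
    (hac : Ps ≪ Pb)
    (w : 𝒳 × 𝒴 → ℝ) (hw : ∀ ζ, w ζ = (Ps.rnDeriv Pb ζ).toReal)
    (s : 𝒳 × 𝒴 → ℝ) (hs : Measurable s)
    (α : ℝ) (hα : α ∈ Set.Ioo (0 : ℝ) 1) (n : ℕ) :
    ENNReal.ofReal (1 - α) ≤
      ((Measure.pi fun _ : Fin n => Pb).prod Ps)
        {ω : (Fin n → 𝒳 × 𝒴) × (𝒳 × 𝒴) |
          ω.2.2 ∈ conformalSet ω.1 s w α ω.2.1} := by
  have hw0 : ∀ ζ, 0 ≤ w ζ := fun ζ => by rw [hw]; exact ENNReal.toReal_nonneg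
  have hwm : Measurable w := by
    have : w = fun ζ => (Ps.rnDeriv Pb ζ).toReal := funext hw
    rw [this]
    exact (Measure.measurable_rnDeriv _ _).ennreal_toReal
  have hPs : Pb.withDensity (fun ζ => ENNReal.ofReal (w ζ)) = Ps := by
    rw [← Measure.withDensity_rnDeriv_eq Ps Pb hac]
    refine withDensity_congr_ae ?_
    filter_upwards [Measure.rnDeriv_lt_top Ps Pb] with ζ hζ
    rw [hw, ENNReal.ofReal_toReal hζ.ne]
  have hw1 : ∫⁻ ζ, ENNReal.ofReal (w ζ) ∂Pb = 1 := by
    rw [← setLIntegral_univ, ← withDensity_apply _ MeasurableSet.univ, hPs, measure_univ]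
  -- The tuple with the test point in position `0`.
  let T : (Fin n → 𝒳 × 𝒴) × (𝒳 × 𝒴) → (Fin (n + 1) → 𝒳 × 𝒴) := fun ω => Fin.cons ω.2 ω.1
  have hT : MeasurePreserving T ((Measure.pi fun _ : Fin n => Pb).prod Pb)
      (Measure.pi fun _ : Fin (n + 1) => Pb) := by
    have h := ((measurePreserving_piFinSuccAbove (fun _ : Fin (n + 1) => Pb) 0).symm _).comp
      (Measure.measurePreserving_swap (μ := Measure.pi fun _ : Fin n => Pb) (ν := Pb))
    convert h using 1
    funext ω
    simp [T, MeasurableEquiv.piFinSuccAbove, Fin.consEquiv]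
  have hBm : MeasurableSet (badSet s w α (0 : Fin (n + 1))) := measurableSet_badSet hs hwm α 0
  have hBTm : MeasurableSet (T ⁻¹' badSet s w α (0 : Fin (n + 1))) := hT.measurable hBm
  have hbad : ((Measure.pi fun _ : Fin n => Pb).prod Ps)
      (T ⁻¹' badSet s w α (0 : Fin (n + 1))) ≤ ENNReal.ofReal α := by
    refine le_trans (le_of_eq ?_)
      (lintegral_indicator_badSet_le Pb hs hwm hw0 hw1 hα.1.le (0 : Fin (n + 1)))
    rw [← hT.lintegral_comp (Measurable.indicator (by fun_prop) hBm), ← hPs,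
      prod_withDensity_right (by fun_prop), withDensity_apply _ hBTm,
      ← lintegral_indicator hBTm]
    rfl
  calc ENNReal.ofReal (1 - α) = 1 - ENNReal.ofReal α := by
        rw [ENNReal.ofReal_sub _ hα.1.le, ENNReal.ofReal_one]
    _ ≤ 1 - ((Measure.pi fun _ : Fin n => Pb).prod Ps)
          (T ⁻¹' badSet s w α (0 : Fin (n + 1))) := tsub_le_tsub_left hbad 1
    _ = ((Measure.pi fun _ : Fin n => Pb).prod Ps)
          (T ⁻¹' badSet s w α (0 : Fin (n + 1)))ᶜ := (prob_compl_eq_one_sub hBTm).symm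
    _ ≤ _ := measure_mono fun ω hω => coe_le_wQuantile_of_notMem hw0 hα.2 ω.1 ω.2 hω
end

section
/- Let (X_1,Y_1),…,(X_n,Y_n) be i.i.d. with law P^b and let (X,Y) ∼ P^* be independent of them. Let ŵ : 𝒵 → [0,∞) be a fixed measurable approximate weight function with E_{P^b}[ŵ(X,Y)] = 1 and (E_{P^b}[ŵ(X,Y)^r])^{1/r} ≤ M_r < ∞ for some r ≥ 2, and set Δ_w = (1/2) E_{P^b}| ŵ(X,Y) − w(X,Y) |. Build the weighted conformal set Ĉ_n using weight function v = ŵ. Then ℙ(Y ∈ Ĉ_n(X)) ≥ 1 − α − Δ_w, where the probability is taken jointly over the calibration sample and the independent test point (X,Y) ∼ P^*. -/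
/-!
Let `Q = wHat · P^b`, a probability measure. If the test point were drawn from `Q`, miscoverage
would have probability at most `α`: miscoverage forces the calibration points with score strictly
below the test score to carry a fraction at least `1 - α` of the total weight (`missSet`). Among
`n + 1` weighted points, those with this property have total weight at most `α` times the whole
(`sum_weight_missed_le`), because the points scoring below the lowest-scoring such point carry
weight at least `1 - α` and do not have the property. Averaging over `n + 1` i.i.d. draws from
`P^b`, with each coordinate in turn as the test point, gives the bound (`lintegral_missSet_le`).

Replacing `Q` by `P^*` increases the probability of an event by at most
`∫ (w - wHat)⁺ dP^b`, which equals `Δ_w` since `w` and `wHat` both have mean one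
(`integral_posPart_sub`).
-/

open MeasureTheory

/-- The pairs (calibration sample, test point) for which the calibration points scoring strictly
below the test point carry at least a fraction `1 - α` of the total weight. The condition is
written without division, so that it is measurable in an evident way; it contains the event of
miscoverage. -/
def missSet {Z : Type*} (n : ℕ) (s v : Z → ℝ) (α : ℝ) : Set ((Fin n → Z) × Z) :=
  {ω | (1 - α) * ((∑ j, v (ω.1 j)) + v ω.2) ≤
    ∑ i, if s (ω.1 i) < s ω.2 then v (ω.1 i) else 0}

lemma measurableSet_missSet {Z : Type*} [MeasurableSpace Z] (n : ℕ) {s v : Z → ℝ}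
    (hs : Measurable s) (hv : Measurable v) (α : ℝ) : MeasurableSet (missSet n s v α) := by
  refine measurableSet_le (by fun_prop) (Finset.measurable_sum _ fun i _ => ?_)
  exact Measurable.ite (measurableSet_lt (by fun_prop) (by fun_prop)) (by fun_prop) (by fun_prop)

lemma mem_missSet_of_wQuantile_lt {Z : Type*} {n : ℕ} {s v : Z → ℝ} (hv : ∀ ζ, 0 ≤ v ζ)
    {α : ℝ} (hα : α < 1) (z : Fin n → Z) (ζ : Z)
    (h : wQuantile z s v α ζ < (s ζ : EReal)) : (z, ζ) ∈ missSet n s v α := by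
  obtain ⟨t, ⟨u, rfl, hu⟩, hlt⟩ := sInf_lt_iff.mp h
  have hlt : u < s ζ := by exact_mod_cast hlt
  have hD : 0 ≤ (∑ j, v (z j)) + v ζ :=
    add_nonneg (Finset.sum_nonneg fun j _ => hv _) (hv _)
  rcases hD.eq_or_lt with hD0 | hD0
  · -- Division by a zero total weight gives zero, which cannot reach `1 - α > 0`.
    simp only [← hD0, div_zero, Finset.sum_const_zero] at hu
    linarith
  · rw [← Finset.sum_div, le_div_iff₀ hD0] at hu
    refine hu.trans ?_
    rw [Finset.sum_filter]
    refine Finset.sum_le_sum fun i _ => ?_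
    dsimp only
    split_ifs with h1 h2 h2
    · exact le_rfl
    · exact absurd (h1.trans_lt hlt) h2
    · exact hv _
    · exact le_rfl

/-- Deterministic core of the argument: the indices below whose score lies at least a fraction
`1 - α` of the total weight have themselves weight at most a fraction `α`. -/
lemma sum_weight_missed_le {ι : Type*} [Fintype ι] (V p : ι → ℝ) (hp : ∀ i, 0 ≤ p i)
    {α : ℝ} (hα : 0 ≤ α) :
    (∑ k, if (1 - α) * ∑ i, p i ≤ ∑ i, (if V i < V k then p i else 0) then p k else 0) ≤
      α * ∑ i, p i := by
  classical
  set B : Finset ι := Finset.univ.filter fun k =>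
    (1 - α) * ∑ i, p i ≤ ∑ i, (if V i < V k then p i else 0) with hB
  rw [← Finset.sum_filter, ← hB]
  rcases B.eq_empty_or_nonempty with h | h
  · rw [h, Finset.sum_empty]
    exact mul_nonneg hα (Finset.sum_nonneg fun i _ => hp i)
  · obtain ⟨k, hk, hmin⟩ := B.exists_min_image V h
    have hk' := (Finset.mem_filter.mp hk).2
    have hsub : ∑ i, (if V i < V k then p i else 0) ≤ ∑ i ∈ Bᶜ, p i := by
      rw [← Finset.sum_filter]
      refine Finset.sum_le_sum_of_subset_of_nonneg (fun i hi => ?_) fun i _ _ => hp i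
      rw [Finset.mem_compl]
      intro hiB
      exact absurd (Finset.mem_filter.mp hi).2 (not_lt.mpr (hmin i hiB))
    have := Finset.sum_add_sum_compl B p
    linarith

/-- If the test point is drawn from the measure with density `v` with respect to `P`, miscoverage
has probability at most `α`. -/
lemma lintegral_missSet_le {Z : Type*} [MeasurableSpace Z] (P : Measure Z)
    [IsProbabilityMeasure P] (n : ℕ) {s v : Z → ℝ} (hs : Measurable s) (hv : Measurable v)
    (hv0 : ∀ ζ, 0 ≤ v ζ) (hv1 : ∫⁻ ζ, ENNReal.ofReal (v ζ) ∂P = 1) {α : ℝ} (hα : 0 ≤ α) :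
    ∫⁻ ζ, (Measure.pi fun _ : Fin n => P) {z | (z, ζ) ∈ missSet n s v α} *
      ENNReal.ofReal (v ζ) ∂P ≤ ENNReal.ofReal α := by
  classical
  have hB := measurableSet_missSet n hs hv α
  set F : Z × (Fin n → Z) → ENNReal := fun q =>
    (Prod.swap ⁻¹' missSet n s v α).indicator (fun q => ENNReal.ofReal (v q.1)) q with hF
  have hFm : Measurable F :=
    Measurable.indicator (by fun_prop) (measurable_swap hB)
  have hLHS : ∫⁻ ζ, (Measure.pi fun _ : Fin n => P) {z | (z, ζ) ∈ missSet n s v α} *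
      ENNReal.ofReal (v ζ) ∂P = ∫⁻ q, F q ∂(P.prod (Measure.pi fun _ : Fin n => P)) := by
    rw [lintegral_prod _ hFm.aemeasurable]
    refine lintegral_congr fun ζ => ?_
    have hm : MeasurableSet {z | (z, ζ) ∈ missSet n s v α} :=
      (measurable_id.prodMk measurable_const) hB
    rw [mul_comm, ← lintegral_indicator_const hm]
    rfl
  -- By exchangeability any of the `n + 1` coordinates can serve as the test point.
  have hk : ∀ k : Fin (n + 1), ∫⁻ q, F q ∂(P.prod (Measure.pi fun _ : Fin n => P)) =
      ∫⁻ z, F (z k, k.removeNth z) ∂(Measure.pi fun _ : Fin (n + 1) => P) := fun k =>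
    ((measurePreserving_piFinSuccAbove (fun _ : Fin (n + 1) => P) k).lintegral_comp hFm).symm
  have hpt : ∀ z : Fin (n + 1) → Z, ∑ k : Fin (n + 1), F (z k, k.removeNth z) ≤
      ENNReal.ofReal α * ∑ k, ENNReal.ofReal (v (z k)) := by
    intro z
    have h := sum_weight_missed_le (fun k => s (z k)) (fun k => v (z k)) (fun k => hv0 _) hα
    have h' := ENNReal.ofReal_le_ofReal h
    rw [ENNReal.ofReal_mul hα, ENNReal.ofReal_sum_of_nonneg (fun i _ => hv0 _),
      ENNReal.ofReal_sum_of_nonneg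
        (fun i _ => by split_ifs <;> first | exact hv0 _ | exact le_rfl)] at h'
    refine le_trans (le_of_eq (Finset.sum_congr rfl fun k _ => ?_)) h'
    have hiff : (z k, k.removeNth z) ∈ Prod.swap ⁻¹' missSet n s v α ↔
        (1 - α) * ∑ i, v (z i) ≤ ∑ i, (if s (z i) < s (z k) then v (z i) else 0) := by
      rw [Fin.sum_univ_succAbove _ k, Fin.sum_univ_succAbove _ k, if_neg (lt_irrefl _),
        zero_add, add_comm (v (z k))]
      rfl
    simp only [hF, Set.indicator_apply, hiff]
    split_ifs <;> simp
  have hint : ∀ k : Fin (n + 1),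
      ∫⁻ z, ENNReal.ofReal (v (z k)) ∂(Measure.pi fun _ : Fin (n + 1) => P) = 1 := fun k =>
    ((measurePreserving_eval (fun _ : Fin (n + 1) => P) k).lintegral_comp
      (f := fun ζ => ENNReal.ofReal (v ζ)) (by fun_prop)).trans hv1
  have hsum : ((n + 1 : ℕ) : ENNReal) * ∫⁻ q, F q ∂(P.prod (Measure.pi fun _ : Fin n => P)) ≤
      ((n + 1 : ℕ) : ENNReal) * ENNReal.ofReal α := by
    calc _ = ∑ k : Fin (n + 1),
          ∫⁻ z, F (z k, k.removeNth z) ∂(Measure.pi fun _ : Fin (n + 1) => P) := by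
          rw [← Finset.sum_congr rfl fun k _ => hk k]; simp
      _ = ∫⁻ z, ∑ k : Fin (n + 1), F (z k, k.removeNth z)
            ∂(Measure.pi fun _ : Fin (n + 1) => P) := by
          refine (lintegral_finsetSum _ fun k _ => ?_).symm
          exact hFm.comp
            (measurePreserving_piFinSuccAbove (fun _ : Fin (n + 1) => P) k).measurable
      _ ≤ ∫⁻ z, ENNReal.ofReal α * ∑ k, ENNReal.ofReal (v (z k))
            ∂(Measure.pi fun _ : Fin (n + 1) => P) := lintegral_mono hpt
      _ = _ := by
          rw [lintegral_const_mul _ (by fun_prop), lintegral_finsetSum _ fun k _ => by fun_prop,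
            Finset.sum_congr rfl fun k _ => hint k]
          simp [mul_comm]
  rw [hLHS]
  exact (ENNReal.mul_le_mul_iff_right (by simp) (ENNReal.natCast_ne_top _)).mp hsum

/-- For functions of equal mean, the mean of the positive part of the difference is half the
`L¹` distance. -/
lemma integral_posPart_sub {Z : Type*} [MeasurableSpace Z] {P : Measure Z} {f g : Z → ℝ}
    (hf : Integrable f P) (hg : Integrable g P) (h : ∫ ζ, f ζ ∂P = ∫ ζ, g ζ ∂P) :
    ∫ ζ, max (g ζ - f ζ) 0 ∂P = (1 / 2) * ∫ ζ, |f ζ - g ζ| ∂P := by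
  have hpt : ∀ ζ, max (g ζ - f ζ) 0 = (1 / 2) * (|f ζ - g ζ| + (g ζ - f ζ)) := by
    intro ζ
    rcases le_total (f ζ) (g ζ) with h | h
    · rw [max_eq_left (by linarith), abs_of_nonpos (by linarith)]; ring
    · rw [max_eq_right (by linarith), abs_of_nonneg (by linarith)]; ring
  simp_rw [hpt]
  have hadd : ∫ ζ, (|f ζ - g ζ| + (g ζ - f ζ)) ∂P =
      ∫ ζ, |f ζ - g ζ| ∂P + ∫ ζ, (g ζ - f ζ) ∂P :=
    integral_add (hf.sub hg).abs (hg.sub hf)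
  rw [integral_const_mul, hadd, integral_sub hg hf, h]
  ring

/-- Lower bound on the marginal coverage of weighted conformal prediction with
approximate weights `wHat` : with calibration data i.i.d. from `P^b` and an independent test
point from `P^*`, we have `ℙ(Y ∈ Ĉ_n(X)) ≥ 1 - α - Δ_w` where
`Δ_w = (1/2) E_{P^b} |wHat - w|`. -/
theorem weighted_conformal_coverage_lower_approx_weights
    {𝒳 𝒴 : Type*} [MeasurableSpace 𝒳] [MeasurableSpace 𝒴]
    [StandardBorelSpace 𝒳] [StandardBorelSpace 𝒴]
    (Pb Ps : Measure (𝒳 × 𝒴)) [IsProbabilityMeasure Pb] [IsProbabilityMeasure Ps]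
    (hac : Ps ≪ Pb)
    (w : 𝒳 × 𝒴 → ℝ) (hw : ∀ ζ, w ζ = (Ps.rnDeriv Pb ζ).toReal)
    (s : 𝒳 × 𝒴 → ℝ) (hs : Measurable s)
    (α : ℝ) (hα : α ∈ Set.Ioo (0 : ℝ) 1)
    (wHat : 𝒳 × 𝒴 → ℝ) (hwHatmeas : Measurable wHat) (hwHatnonneg : ∀ ζ, 0 ≤ wHat ζ)
    (hwHatmean : ∫ ζ, wHat ζ ∂Pb = 1)
    (r Mr : ℝ) (hr : 2 ≤ r)
    (hwHatr_int : Integrable (fun ζ => wHat ζ ^ r) Pb)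
    (hMr : (∫ ζ, wHat ζ ^ r ∂Pb) ^ (1 / r) ≤ Mr)
    (n : ℕ) :
    ENNReal.ofReal (1 - α - (1 / 2) * ∫ ζ, |wHat ζ - w ζ| ∂Pb) ≤
      ((Measure.pi fun _ : Fin n => Pb).prod Ps)
        {ω : (Fin n → 𝒳 × 𝒴) × (𝒳 × 𝒴) |
          ω.2.2 ∈ conformalSet ω.1 s wHat α ω.2.1} := by
  obtain ⟨hα0, hα1⟩ := hα
  have hvi : Integrable wHat Pb := by
    by_contra h
    rw [integral_undef h] at hwHatmean
    exact zero_ne_one hwHatmean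
  have hv1 : ∫⁻ ζ, ENNReal.ofReal (wHat ζ) ∂Pb = 1 := by
    rw [← ofReal_integral_eq_lintegral_ofReal hvi (ae_of_all _ hwHatnonneg), hwHatmean,
      ENNReal.ofReal_one]
  obtain rfl : w = fun ζ => (Ps.rnDeriv Pb ζ).toReal := funext hw
  have hwi : Integrable (fun ζ => (Ps.rnDeriv Pb ζ).toReal) Pb :=
    Measure.integrable_toReal_rnDeriv
  have hw1 : ∫ ζ, (Ps.rnDeriv Pb ζ).toReal ∂Pb = 1 := by
    rw [Measure.integral_toReal_rnDeriv hac]; simp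
  set Δ : ℝ := (1 / 2) * ∫ ζ, |wHat ζ - (Ps.rnDeriv Pb ζ).toReal| ∂Pb with hΔ
  have hΔ0 : 0 ≤ Δ := mul_nonneg (by norm_num) (integral_nonneg fun _ => abs_nonneg _)
  have hΔl : ∫⁻ ζ, ENNReal.ofReal (max ((Ps.rnDeriv Pb ζ).toReal - wHat ζ) 0) ∂Pb =
      ENNReal.ofReal Δ := by
    rw [hΔ, ← integral_posPart_sub hvi hwi (hwHatmean.trans hw1.symm)]
    exact (ofReal_integral_eq_lintegral_ofReal (hwi.sub hvi).pos_part
      (ae_of_all _ fun _ => le_max_right _ _)).symm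
  have hB := measurableSet_missSet n hs hwHatmeas α
  set μ := (Measure.pi fun _ : Fin n => Pb) with hμ
  have hgm : Measurable fun ζ => μ {z | (z, ζ) ∈ missSet n s wHat α} :=
    measurable_measure_prodMk_right hB
  have hmiss : (μ.prod Ps) (missSet n s wHat α) ≤ ENNReal.ofReal α + ENNReal.ofReal Δ := by
    rw [Measure.prod_apply_symm hB]
    calc ∫⁻ ζ, μ {z | (z, ζ) ∈ missSet n s wHat α} ∂Ps
        = ∫⁻ ζ, Ps.rnDeriv Pb ζ * μ {z | (z, ζ) ∈ missSet n s wHat α} ∂Pb :=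
          (lintegral_rnDeriv_mul hac hgm.aemeasurable).symm
      _ ≤ ∫⁻ ζ, (μ {z | (z, ζ) ∈ missSet n s wHat α} * ENNReal.ofReal (wHat ζ) +
            ENNReal.ofReal (max ((Ps.rnDeriv Pb ζ).toReal - wHat ζ) 0)) ∂Pb := by
          refine lintegral_mono_ae ?_
          filter_upwards [Ps.rnDeriv_lt_top Pb] with ζ hζ
          have h1 : Ps.rnDeriv Pb ζ ≤ ENNReal.ofReal (wHat ζ) +
              ENNReal.ofReal (max ((Ps.rnDeriv Pb ζ).toReal - wHat ζ) 0) := by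
            rw [← ENNReal.ofReal_add (hwHatnonneg ζ) (le_max_right _ _)]
            refine ENNReal.le_ofReal_iff_toReal_le hζ.ne
              (add_nonneg (hwHatnonneg ζ) (le_max_right _ _)) |>.mpr ?_
            linarith [le_max_left ((Ps.rnDeriv Pb ζ).toReal - wHat ζ) 0]
          calc _ ≤ _ := mul_le_mul_left h1 _
            _ = μ {z | (z, ζ) ∈ missSet n s wHat α} * ENNReal.ofReal (wHat ζ) +
                ENNReal.ofReal (max ((Ps.rnDeriv Pb ζ).toReal - wHat ζ) 0) *
                  μ {z | (z, ζ) ∈ missSet n s wHat α} := by ring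
            _ ≤ _ := by
              gcongr
              exact mul_le_of_le_one_right' prob_le_one
      _ ≤ _ := by
          have hm : Measurable fun ζ =>
              μ {z | (z, ζ) ∈ missSet n s wHat α} * ENNReal.ofReal (wHat ζ) :=
            hgm.mul (by fun_prop)
          rw [lintegral_add_left hm, hΔl]
          gcongr
          exact lintegral_missSet_le Pb n hs hwHatmeas hwHatnonneg hv1 hα0.le
  calc ENNReal.ofReal (1 - α - Δ)
      = 1 - (ENNReal.ofReal α + ENNReal.ofReal Δ) := by
        rw [← ENNReal.ofReal_add hα0.le hΔ0, sub_sub,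
          ENNReal.ofReal_sub _ (add_nonneg hα0.le hΔ0), ENNReal.ofReal_one]
    _ ≤ 1 - (μ.prod Ps) (missSet n s wHat α) := tsub_le_tsub_left hmiss _
    _ = (μ.prod Ps) (missSet n s wHat α)ᶜ := (prob_compl_eq_one_sub hB).symm
    _ ≤ _ := by
        refine measure_mono fun ω hω => ?_
        by_contra hnot
        exact hω (mem_missSet_of_wQuantile_lt hwHatnonneg hα1 ω.1 ω.2 (not_le.mp hnot))
end

section
/- Let (X_1,Y_1),…,(X_n,Y_n) be i.i.d. with law P^b and let (X,Y) ∼ P^* be independent of them. Let ŵ : 𝒵 → [0,∞) be a fixed measurable approximate weight function with E_{P^b}[ŵ(X,Y)] = 1 and (E_{P^b}[ŵ(X,Y)^r])^{1/r} ≤ M_r < ∞ for some r ≥ 2, and set Δ_w = (1/2) E_{P^b}| ŵ(X,Y) − w(X,Y) |. Build the weighted conformal set Ĉ_n using weight function v = ŵ. If in addition the scores V_1 = s(X_1,Y_1),…,V_n = s(X_n,Y_n) are almost surely pairwise distinct, then there exists a positive constant c depending only on M_r and r such that ℙ(Y ∈ Ĉ_n(X)) ≤ 1 − α + Δ_w +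 c·n^{1/r − 1}, where the probability is taken jointly over the calibration sample and the independent test point (X,Y) ∼ P^*. -/
/-! The coverage event is contained in the event that the normalised `wHat`-mass of the calibration
scores lying strictly below the test score is less than `1 - α` (`conformal_lowerMass_lt`).

Replacing the test law `Ps` by `wHat · Pb` changes the probability of any event by at most the total
variation distance `½ ∫ |wHat - w| dPb` (`measure_le_tilted_add`).

Under `Pbⁿ ⊗ (wHat · Pb)` the sample is weighted exchangeable: writing the probability as an integral
over `n + 1` i.i.d. points of `Pb`, any of the `n + 1` points may play the role of the test point, so
that `n + 1` times the probability is the integral of a sum over the test index `k`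
(`succ_mul_lintegral_le`). When the scores are distinct, this sum is, pointwise, the total weight of
an initial segment of the ordered scores, and hence at most `(1 - α) ∑ v + max v`
(`sum_lower_le`). Bounding the maximum by the `ℓ^r` norm and applying Jensen's inequality gives an
excess of at most `Mr (n + 1) ^ (1 / r) / (n + 1)`.

The law of the score under `Pb` has no atoms as soon as `n ≥ 2`, so the `n + 1` scores are then almost
surely distinct; for `n = 1` the claimed bound exceeds `1` because `c ≥ 1`. -/

open MeasureTheory

universe u v

/-- The normalised `v`-mass of those calibration points whose score is strictly below the score of
the test point `ζ`. -/
noncomputable def lowerMass {Z : Type*} {n : ℕ} (s v : Z → ℝ) (z : Fin n → Z) (ζ : Z) : ℝ :=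
  ∑ i, if s (z i) < s ζ then v (z i) / ((∑ j, v (z j)) + v ζ) else 0

lemma conformal_lowerMass_lt {𝒳 𝒴 : Type*} {n : ℕ} (z : Fin n → 𝒳 × 𝒴) (s v : 𝒳 × 𝒴 → ℝ)
    (hv : ∀ ζ, 0 ≤ v ζ) {α : ℝ} (hα : α < 1) (ζ : 𝒳 × 𝒴)
    (h : ζ.2 ∈ conformalSet z s v α ζ.1) : lowerMass s v z ζ < 1 - α := by
  by_contra! hcon
  have hne : (Finset.univ.filter fun i => s (z i) < s ζ).Nonempty := by
    by_contra hemp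
    rw [Finset.not_nonempty_iff_eq_empty, Finset.filter_eq_empty_iff] at hemp
    have : lowerMass s v z ζ = 0 :=
      Finset.sum_eq_zero fun i hi => if_neg (hemp hi)
    linarith
  -- the largest calibration score below the test score already reaches the level `1 - α`
  obtain ⟨k, hk, hmax⟩ := Finset.exists_max_image _ (fun i => s (z i)) hne
  simp only [Finset.mem_filter, Finset.mem_univ, true_and] at hk hmax
  have hle : wQuantile z s v α ζ ≤ (s (z k) : EReal) := by
    refine sInf_le ⟨s (z k), rfl, hcon.trans ?_⟩
    rw [lowerMass, ← Finset.sum_filter]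
    refine Finset.sum_le_sum_of_subset_of_nonneg ?_ ?_
    · intro i hi
      simp only [Finset.mem_filter, Finset.mem_univ, true_and] at hi ⊢
      exact hmax i hi
    · intro i _ _
      exact div_nonneg (hv _) (add_nonneg (Finset.sum_nonneg fun j _ => hv _) (hv _))
  have h' : (s ζ : EReal) ≤ wQuantile z s v α ζ := h
  have := EReal.coe_le_coe_iff.1 (h'.trans hle)
  linarith

lemma measurable_lowerMass {Z : Type*} [MeasurableSpace Z] {n : ℕ} {s v : Z → ℝ}
    (hs : Measurable s) (hv : Measurable v) :
    Measurable fun ω : (Fin n → Z) × Z => lowerMass s v ω.1 ω.2 := by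
  unfold lowerMass
  refine Finset.measurable_sum _ fun i _ => ?_
  refine Measurable.ite ?_ (by fun_prop) measurable_const
  exact measurableSet_lt (by fun_prop) (by fun_prop)

/-- For distinct scores `V`, the points with strictly lower mass below `β` form an initial segment in
the order of `V`; its mass exceeds `β` times the total mass by at most one weight, which is bounded
by the `ℓ^r` norm of the weights. -/
lemma sum_lower_le {ι : Type*} [Fintype ι] (V v : ι → ℝ) (hV : Function.Injective V)
    (hv : ∀ i, 0 ≤ v i) {β r : ℝ} (hβ : 0 ≤ β) (hr : 0 < r) :
    (∑ k, if (∑ i, if V i < V k then v i / (∑ j, v j) else 0) < β then v k else 0)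
      ≤ β * (∑ j, v j) + (∑ j, v j ^ r) ^ (1 / r) := by
  classical
  have hS : 0 ≤ ∑ j, v j := Finset.sum_nonneg fun j _ => hv j
  have hF : 0 ≤ ∑ j, v j ^ r := Finset.sum_nonneg fun j _ => Real.rpow_nonneg (hv j) r
  rw [← Finset.sum_filter]
  rcases Finset.eq_empty_or_nonempty
    (Finset.univ.filter fun k => (∑ i, if V i < V k then v i / (∑ j, v j) else 0) < β) with h0 | hne
  · rw [h0, Finset.sum_empty]
    have := Real.rpow_nonneg hF (1 / r)
    positivity
  obtain ⟨k, hk, hmax⟩ := Finset.exists_max_image _ V hne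
  rw [Finset.mem_filter] at hk
  have hvk : v k ≤ (∑ j, v j ^ r) ^ (1 / r) := by
    have h1 : v k ^ r ≤ ∑ j, v j ^ r :=
      Finset.single_le_sum (f := fun j => v j ^ r) (fun j _ => Real.rpow_nonneg (hv j) r)
        (Finset.mem_univ k)
    calc v k = (v k ^ r) ^ (1 / r) := by
          rw [one_div, Real.rpow_rpow_inv (hv k) hr.ne']
      _ ≤ _ := Real.rpow_le_rpow (Real.rpow_nonneg (hv k) r) h1 (by positivity)
  have hlow : (∑ i ∈ Finset.univ.filter fun i => V i < V k, v i) ≤ β * ∑ j, v j := by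
    rcases hS.eq_or_lt with h0 | hpos
    · rw [← h0, mul_zero, h0]
      exact Finset.sum_le_sum_of_subset_of_nonneg (Finset.filter_subset _ _) fun i _ _ => hv i
    · have h2 := hk.2
      rw [← Finset.sum_filter, ← Finset.sum_div, div_lt_iff₀ hpos] at h2
      exact h2.le
  calc _ ≤ ∑ i ∈ insert k (Finset.univ.filter fun i => V i < V k), v i := by
        refine Finset.sum_le_sum_of_subset_of_nonneg ?_ fun i _ _ => hv i
        intro i hi
        rcases (hmax i hi).eq_or_lt with h | h
        · simp [hV h]
        · simp [h]
    _ = v k + ∑ i ∈ Finset.univ.filter fun i => V i < V k, v i :=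
        Finset.sum_insert (by simp)
    _ ≤ _ := by linarith

/-- `Ps` and `v · Pb` are probability measures, so `v - dPs/dPb` has mean zero and its integral over
any event is at most half its `L¹` norm in absolute value. -/
lemma measure_le_tilted_add {Z : Type*} [MeasurableSpace Z] (Pb Ps : Measure Z)
    [IsProbabilityMeasure Pb] [IsProbabilityMeasure Ps] (hac : Ps ≪ Pb) (v : Z → ℝ)
    (hv : ∀ ζ, 0 ≤ v ζ) (hvi : Integrable v Pb) (h1 : ∫ ζ, v ζ ∂Pb = 1) {B : Set Z}
    (hB : MeasurableSet B) :
    Ps B ≤ (∫⁻ ζ in B, ENNReal.ofReal (v ζ) ∂Pb)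
      + ENNReal.ofReal ((1 / 2) * ∫ ζ, |v ζ - (Ps.rnDeriv Pb ζ).toReal| ∂Pb) := by
  have hwi : Integrable (fun ζ => (Ps.rnDeriv Pb ζ).toReal) Pb := Measure.integrable_toReal_rnDeriv
  have hfi := hvi.sub hwi
  have hw1 : ∫ ζ, (Ps.rnDeriv Pb ζ).toReal ∂Pb = 1 := by
    have := Measure.setIntegral_toReal_rnDeriv hac Set.univ
    simpa using this
  have hwB := Measure.setIntegral_toReal_rnDeriv hac B
  rw [← ofReal_integral_eq_lintegral_ofReal hvi.integrableOn (Filter.Eventually.of_forall hv),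
    ← ENNReal.ofReal_add (setIntegral_nonneg hB fun ζ _ => hv ζ)
      (mul_nonneg (by norm_num) (integral_nonneg fun _ => abs_nonneg _)),
    ← ENNReal.ofReal_toReal (measure_ne_top Ps B)]
  refine ENNReal.ofReal_le_ofReal ?_
  change Ps.real B ≤ _
  rw [← hwB]
  have hsplit := integral_add_compl hB hfi
  have hasplit := integral_add_compl hB hfi.abs
  have htot : ∫ ζ, (v - fun ζ => (Ps.rnDeriv Pb ζ).toReal) ζ ∂Pb = 0 := by
    have := integral_sub hvi hwi
    simp only [Pi.sub_apply]
    rw [this, h1, hw1, sub_self]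
  have hBsub := integral_sub hvi.integrableOn (hwi.integrableOn (s := B))
  have n1 := neg_abs_le (∫ ζ in B, (v - fun ζ => (Ps.rnDeriv Pb ζ).toReal) ζ ∂Pb)
  have a1 := abs_integral_le_integral_abs (μ := Pb.restrict B)
    (f := v - fun ζ => (Ps.rnDeriv Pb ζ).toReal)
  have n2 := le_abs_self (∫ ζ in Bᶜ, (v - fun ζ => (Ps.rnDeriv Pb ζ).toReal) ζ ∂Pb)
  have a2 := abs_integral_le_integral_abs (μ := Pb.restrict Bᶜ)
    (f := v - fun ζ => (Ps.rnDeriv Pb ζ).toReal)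
  simp only [Pi.sub_apply] at *
  linarith

/-- If at least two i.i.d. scores are almost surely distinct then the score law has no atoms. -/
lemma score_fiber_null {Z : Type*} [MeasurableSpace Z] (Pb : Measure Z) [IsProbabilityMeasure Pb]
    (s : Z → ℝ) {n : ℕ} (hn : 2 ≤ n)
    (hinj : ∀ᵐ z ∂(Measure.pi fun _ : Fin n => Pb), Function.Injective fun i => s (z i)) (a : ℝ) :
    Pb {ζ | s ζ = a} = 0 := by
  have h0 : (Measure.pi fun _ : Fin n => Pb) (Set.univ.pi fun _ => {ζ | s ζ = a}) = 0 := by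
    refine measure_mono_null ?_ (ae_iff.1 hinj)
    intro z hz hi
    have h01 : (⟨0, by omega⟩ : Fin n) = ⟨1, by omega⟩ :=
      hi ((hz _ trivial : s _ = a).trans (hz _ trivial : s _ = a).symm)
    simp at h01
  rw [Measure.pi_pi, Finset.prod_const] at h0
  exact pow_eq_zero_iff (by simp; omega) |>.1 h0

lemma ae_injective_of_fiber_null {Z : Type*} [MeasurableSpace Z] (Pb : Measure Z)
    [IsProbabilityMeasure Pb] (s : Z → ℝ) (hs : Measurable s) (h : ∀ a, Pb {ζ | s ζ = a} = 0)
    (n : ℕ) :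
    ∀ᵐ z ∂(Measure.pi fun _ : Fin (n + 1) => Pb), Function.Injective fun i => s (z i) := by
  have key : ∀ (i : Fin (n + 1)) (j : Fin n),
      ∀ᵐ z ∂(Measure.pi fun _ : Fin (n + 1) => Pb), s (z i) ≠ s (z (i.succAbove j)) := by
    intro i j
    have hmp := measurePreserving_piFinSuccAbove (fun _ : Fin (n + 1) => Pb) i
    have hms : MeasurableSet {p : Z × (Fin n → Z) | s p.1 = s (p.2 j)} :=
      measurableSet_eq_fun (by fun_prop) (by fun_prop)
    have hz : (Pb.prod (Measure.pi fun _ : Fin n => Pb))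
        {p : Z × (Fin n → Z) | s p.1 = s (p.2 j)} = 0 := by
      rw [Measure.prod_apply_symm hms]
      simp only [Set.preimage_ofPred_eq, h, lintegral_zero]
    have := hmp.quasiMeasurePreserving.preimage_null hz
    rw [ae_iff]
    refine measure_mono_null ?_ this
    intro z hz
    exact not_not.1 hz
  have key' := ae_all_iff.2 fun i => ae_all_iff.2 (key i)
  filter_upwards [key'] with z hz i j hij
  by_contra hne
  obtain ⟨k, rfl⟩ := Fin.exists_succAbove_eq (Ne.symm hne)
  exact hz i k hij

/-- Weighted exchangeability: any of `n + 1` i.i.d. points may serve as the test point, so `n + 1`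
times the tilted probability of `{lowerMass < β}` is the integral of a sum over the test index, to
which `sum_lower_le` applies pointwise. -/
lemma succ_mul_lintegral_le {Z : Type*} [MeasurableSpace Z] (Pb : Measure Z)
    [IsProbabilityMeasure Pb] (s v : Z → ℝ) (hs : Measurable s) (hvm : Measurable v)
    (hv : ∀ ζ, 0 ≤ v ζ) {n : ℕ} {β r : ℝ} (hβ : 0 ≤ β) (hr : 0 < r)
    (hinj : ∀ᵐ z ∂(Measure.pi fun _ : Fin (n + 1) => Pb), Function.Injective fun i => s (z i)) :
    ((n + 1 : ℕ) : ENNReal) * (∫⁻ z, ∫⁻ ζ in {ζ | lowerMass s v z ζ < β}, ENNReal.ofReal (v ζ) ∂Pb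
        ∂(Measure.pi fun _ : Fin n => Pb))
      ≤ ∫⁻ z, ENNReal.ofReal (β * (∑ j, v (z j)) + (∑ j, v (z j) ^ r) ^ (1 / r))
        ∂(Measure.pi fun _ : Fin (n + 1) => Pb) := by
  classical
  let g : Z × (Fin n → Z) → ENNReal := fun p =>
    ENNReal.ofReal (if lowerMass s v p.2 p.1 < β then v p.1 else 0)
  have hset : MeasurableSet {ω : (Fin n → Z) × Z | lowerMass s v ω.1 ω.2 < β} :=
    measurableSet_lt (measurable_lowerMass hs hvm) measurable_const
  have hg : Measurable g := by
    refine ENNReal.measurable_ofReal.comp (Measurable.ite ?_ (by fun_prop) measurable_const)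
    exact measurable_swap hset
  have hI : (∫⁻ z, ∫⁻ ζ in {ζ | lowerMass s v z ζ < β}, ENNReal.ofReal (v ζ) ∂Pb
        ∂(Measure.pi fun _ : Fin n => Pb)) = ∫⁻ p, g p ∂(Pb.prod (Measure.pi fun _ : Fin n => Pb)) := by
    rw [lintegral_prod_symm _ hg.aemeasurable]
    refine lintegral_congr fun z => ?_
    have hsec : MeasurableSet {ζ | lowerMass s v z ζ < β} := measurable_prodMk_left hset
    rw [← lintegral_indicator hsec]
    refine lintegral_congr fun ζ => ?_
    by_cases hc : lowerMass s v z ζ < β <;> simp [g, hc, Set.indicator]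
  have hk : ∀ k : Fin (n + 1), ∫⁻ p, g p ∂(Pb.prod (Measure.pi fun _ : Fin n => Pb))
      = ∫⁻ z, ENNReal.ofReal (if (∑ i, if s (z i) < s (z k) then v (z i) / (∑ j, v (z j)) else 0) < β
          then v (z k) else 0) ∂(Measure.pi fun _ : Fin (n + 1) => Pb) := by
    intro k
    have hmp := measurePreserving_piFinSuccAbove (fun _ : Fin (n + 1) => Pb) k
    rw [← hmp.lintegral_comp hg]
    refine lintegral_congr fun z => ?_
    have e : lowerMass s v (fun j => z (k.succAbove j)) (z k)
        = ∑ i, if s (z i) < s (z k) then v (z i) / (∑ j, v (z j)) else 0 := by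
      rw [lowerMass, Fin.sum_univ_succAbove _ k, if_neg (lt_irrefl _), zero_add,
        Fin.sum_univ_succAbove (fun j => v (z j)) k, add_comm (v (z k))]
    rw [← e]
    rfl
  have hmeas : ∀ k : Fin (n + 1), Measurable fun z : Fin (n + 1) → Z =>
      ENNReal.ofReal (if (∑ i, if s (z i) < s (z k) then v (z i) / (∑ j, v (z j)) else 0) < β
          then v (z k) else 0) := by
    intro k
    refine ENNReal.measurable_ofReal.comp (Measurable.ite ?_ (by fun_prop) measurable_const)
    refine measurableSet_lt (Finset.measurable_sum _ fun i _ => ?_) measurable_const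
    refine Measurable.ite ?_ (by fun_prop) measurable_const
    exact measurableSet_lt (by fun_prop) (by fun_prop)
  rw [hI]
  calc _ = ∑ k : Fin (n + 1), ∫⁻ p, g p ∂(Pb.prod (Measure.pi fun _ : Fin n => Pb)) := by
        simp
    _ = _ := by
        rw [Finset.sum_congr rfl fun k _ => hk k, ← lintegral_finsetSum _ fun k _ => hmeas k]
    _ ≤ _ := by
        refine lintegral_mono_ae ?_
        filter_upwards [hinj] with z hz
        rw [← ENNReal.ofReal_sum_of_nonneg]
        · exact ENNReal.ofReal_le_ofReal
            (sum_lower_le (fun i => s (z i)) (fun i => v (z i)) hz (fun i => hv _) hβ hr)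
        · intro k _
          split_ifs
          exacts [hv _, le_rfl]

/-- Jensen's inequality for `t ↦ t ^ r`, with `f` standing for the `r`-th power. -/
lemma lintegral_rpow_inv_le {Ω : Type*} [MeasurableSpace Ω] (μ : Measure Ω) [IsProbabilityMeasure μ]
    {r : ℝ} (hr : 1 < r) {f : Ω → ENNReal} (hf : Measurable f) :
    ∫⁻ a, f a ^ (1 / r) ∂μ ≤ (∫⁻ a, f a ∂μ) ^ (1 / r) := by
  have h := ENNReal.lintegral_mul_le_Lp_mul_Lq μ (Real.HolderConjugate.conjExponent hr)
    (f := fun a => f a ^ (1 / r)) (g := fun _ => 1) (hf.pow_const _).aemeasurable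
    aemeasurable_const
  have hr0 : r ≠ 0 := by linarith
  simpa [← ENNReal.rpow_mul, hr0] using h

lemma lintegral_bound {Z : Type*} [MeasurableSpace Z] (Pb : Measure Z)
    [IsProbabilityMeasure Pb] (v : Z → ℝ) (hvm : Measurable v)
    (hv : ∀ ζ, 0 ≤ v ζ) (hvi : Integrable v Pb) (h1 : ∫ ζ, v ζ ∂Pb = 1) {m : ℕ} {β r Mr : ℝ}
    (hβ : 0 ≤ β) (hr : 1 < r) (hri : Integrable (fun ζ => v ζ ^ r) Pb)
    (hM : (∫ ζ, v ζ ^ r ∂Pb) ^ (1 / r) ≤ Mr) :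
    ∫⁻ z, ENNReal.ofReal (β * (∑ j, v (z j)) + (∑ j, v (z j) ^ r) ^ (1 / r))
        ∂(Measure.pi fun _ : Fin m => Pb) ≤ ENNReal.ofReal (β * m + (m : ℝ) ^ (1 / r) * Mr) := by
  have hvr : ∀ ζ, 0 ≤ v ζ ^ r := fun ζ => Real.rpow_nonneg (hv ζ) r
  have hsum : ∀ f : Z → ℝ, Measurable f → (∀ ζ, 0 ≤ f ζ) → Integrable f Pb →
      ∫⁻ z, ENNReal.ofReal (∑ j, f (z j)) ∂(Measure.pi fun _ : Fin m => Pb)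
        = ENNReal.ofReal (m * ∫ ζ, f ζ ∂Pb) := by
    intro f hfm hf hfi
    have hof : Measurable fun ζ => ENNReal.ofReal (f ζ) := ENNReal.measurable_ofReal.comp hfm
    simp_rw [ENNReal.ofReal_sum_of_nonneg fun j (_ : j ∈ Finset.univ) => hf _]
    have hoj : ∀ j : Fin m, Measurable fun z : Fin m → Z => ENNReal.ofReal (f (z j)) :=
      fun j => hof.comp (measurable_pi_apply j)
    rw [lintegral_finsetSum _ fun j _ => hoj j]
    have : ∀ j : Fin m, ∫⁻ z, ENNReal.ofReal (f (z j)) ∂(Measure.pi fun _ : Fin m => Pb)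
        = ENNReal.ofReal (∫ ζ, f ζ ∂Pb) := fun j => by
      rw [ofReal_integral_eq_lintegral_ofReal hfi (Filter.Eventually.of_forall hf)]
      exact (measurePreserving_eval (fun _ : Fin m => Pb) j).lintegral_comp hof
    simp only [this, Finset.sum_const, Finset.card_univ, Fintype.card_fin, nsmul_eq_mul]
    rw [ENNReal.ofReal_mul (by positivity), ENNReal.ofReal_natCast]
  have hvrm : Measurable fun ζ => v ζ ^ r := hvm.pow_const r
  have hFm : Measurable fun z : Fin m → Z => ENNReal.ofReal (∑ j, v (z j) ^ r) :=
    ENNReal.measurable_ofReal.comp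
      (Finset.measurable_sum _ fun j _ => hvrm.comp (measurable_pi_apply j))
  have hS : ∀ z : Fin m → Z, 0 ≤ ∑ j, v (z j) := fun z => Finset.sum_nonneg fun j _ => hv _
  have hF : ∀ z : Fin m → Z, 0 ≤ ∑ j, v (z j) ^ r := fun z => Finset.sum_nonneg fun j _ => hvr _
  have hI0 : 0 ≤ ∫ ζ, v ζ ^ r ∂Pb := integral_nonneg hvr
  have hM0 : 0 ≤ Mr := (Real.rpow_nonneg hI0 _).trans hM
  have hr0 : 0 ≤ 1 / r := by positivity
  have hterm : ∀ z : Fin m → Z,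
      ENNReal.ofReal (β * (∑ j, v (z j)) + (∑ j, v (z j) ^ r) ^ (1 / r))
        = ENNReal.ofReal β * ENNReal.ofReal (∑ j, v (z j))
          + ENNReal.ofReal (∑ j, v (z j) ^ r) ^ (1 / r) := fun z => by
    rw [ENNReal.ofReal_add (mul_nonneg hβ (hS z)) (Real.rpow_nonneg (hF z) _),
      ENNReal.ofReal_mul hβ, ENNReal.ofReal_rpow_of_nonneg (hF z) hr0]
  simp_rw [hterm]
  rw [lintegral_add_right _ (hFm.pow_const _),
    lintegral_const_mul' _ _ ENNReal.ofReal_ne_top, hsum v hvm hv hvi, h1, mul_one,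
    ENNReal.ofReal_add (by positivity) (by positivity), ENNReal.ofReal_mul hβ]
  gcongr
  refine (lintegral_rpow_inv_le _ hr hFm).trans ?_
  rw [hsum _ hvrm hvr hri, ENNReal.ofReal_rpow_of_nonneg (by positivity) hr0,
    Real.mul_rpow (by positivity) hI0]
  exact ENNReal.ofReal_le_ofReal (mul_le_mul_of_nonneg_left hM (by positivity))

/-- Upper bound on the marginal coverage of weighted conformal prediction with
approximate weights `ŵ` : if the non-conformity scores of the calibration sample are
almost surely pairwise distinct, then there is a constant `c > 0`, depending only on
`M_r` and `r`, such that `ℙ(Y ∈ Ĉ_n(X)) ≤ 1 - α + Δ_w + c n^{1/r - 1}` where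
`Δ_w = (1/2) E_{P^b} |ŵ - w|`. -/
theorem weighted_conformal_coverage_upper_approx_weights (r Mr : ℝ) (hr : 2 ≤ r) :
    ∃ c : ℝ, 0 < c ∧
      ∀ (𝒳 : Type u) (𝒴 : Type v) [MeasurableSpace 𝒳] [MeasurableSpace 𝒴]
        [StandardBorelSpace 𝒳] [StandardBorelSpace 𝒴]
        (Pb Ps : Measure (𝒳 × 𝒴)) [IsProbabilityMeasure Pb] [IsProbabilityMeasure Ps],
        Ps ≪ Pb →
        ∀ (w : 𝒳 × 𝒴 → ℝ), (∀ ζ, w ζ = (Ps.rnDeriv Pb ζ).toReal) →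
        ∀ (s : 𝒳 × 𝒴 → ℝ), Measurable s →
        ∀ (α : ℝ), α ∈ Set.Ioo (0 : ℝ) 1 →
        ∀ (wHat : 𝒳 × 𝒴 → ℝ), Measurable wHat → (∀ ζ, 0 ≤ wHat ζ) →
        (∫ ζ, wHat ζ ∂Pb) = 1 →
        Integrable (fun ζ => wHat ζ ^ r) Pb →
        (∫ ζ, wHat ζ ^ r ∂Pb) ^ (1 / r) ≤ Mr →
        ∀ (n : ℕ), 1 ≤ n →
        -- the scores of the calibration sample have no ties almost surely
        (∀ᵐ z ∂(Measure.pi fun _ : Fin n => Pb),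
          Function.Injective fun i => s (z i)) →
        ((Measure.pi fun _ : Fin n => Pb).prod Ps)
            {ω : (Fin n → 𝒳 × 𝒴) × (𝒳 × 𝒴) |
              ω.2.2 ∈ conformalSet ω.1 s wHat α ω.2.1}
          ≤ ENNReal.ofReal
              (1 - α + (1 / 2) * (∫ ζ, |wHat ζ - w ζ| ∂Pb)
                + c * (n : ℝ) ^ (1 / r - 1)) := by
  refine ⟨max Mr 1, by positivity, ?_⟩
  intro 𝒳 𝒴 _ _ _ _ Pb Ps _ _ hac w hw s hs α hα v hvm hv h1 hri hM n hn hinj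
  obtain rfl : w = fun ζ => (Ps.rnDeriv Pb ζ).toReal := funext hw
  have hΔ : 0 ≤ (1 / 2) * ∫ ζ, |v ζ - (Ps.rnDeriv Pb ζ).toReal| ∂Pb :=
    mul_nonneg (by norm_num) (integral_nonneg fun _ => abs_nonneg _)
  have hc1 : 1 ≤ max Mr 1 := le_max_right _ _
  rcases hn.eq_or_lt with rfl | hn2
  · refine prob_le_one.trans ?_
    rw [ENNReal.one_le_ofReal]
    have := hα.2
    simp only [Nat.cast_one, Real.one_rpow, mul_one]
    linarith
  have hvi : Integrable v Pb := by
    by_contra hni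
    rw [integral_undef hni] at h1
    exact zero_ne_one h1
  have hβ : 0 ≤ 1 - α := by linarith [hα.2]
  have hset : MeasurableSet {ω : (Fin n → 𝒳 × 𝒴) × (𝒳 × 𝒴) | lowerMass s v ω.1 ω.2 < 1 - α} :=
    measurableSet_lt (measurable_lowerMass hs hvm) measurable_const
  have hM0 : 0 ≤ Mr := (Real.rpow_nonneg (integral_nonneg fun ζ => Real.rpow_nonneg (hv ζ) r) _).trans hM
  have hinj' := ae_injective_of_fiber_null Pb s hs (score_fiber_null Pb s hn2 hinj) n
  have hmain := (succ_mul_lintegral_le Pb s v hs hvm hv hβ (by linarith : 0 < r) hinj').trans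
    (lintegral_bound Pb v hvm hv hvi h1 hβ (by linarith) hri hM)
  have hN : (0 : ℝ) < ((n + 1 : ℕ) : ℝ) := by positivity
  have hn0 : (0 : ℝ) < (n : ℝ) := by exact_mod_cast hn
  have htilt : (∫⁻ z, ∫⁻ ζ in {ζ | lowerMass s v z ζ < 1 - α}, ENNReal.ofReal (v ζ) ∂Pb
        ∂(Measure.pi fun _ : Fin n => Pb))
      ≤ ENNReal.ofReal (1 - α + max Mr 1 * (n : ℝ) ^ (1 / r - 1)) := by
    have hN' : ((n + 1 : ℕ) : ENNReal) ≠ 0 := by simp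
    rw [← ENNReal.mul_le_mul_iff_right hN' (ENNReal.natCast_ne_top _)]
    refine hmain.trans ?_
    rw [← ENNReal.ofReal_natCast, ← ENNReal.ofReal_mul hN.le]
    refine ENNReal.ofReal_le_ofReal ?_
    have e : ((n + 1 : ℕ) : ℝ) ^ (1 / r)
        = ((n + 1 : ℕ) : ℝ) * ((n + 1 : ℕ) : ℝ) ^ (1 / r - 1) := by
      rw [Real.rpow_sub_one hN.ne']
      field_simp
    have hle : ((n + 1 : ℕ) : ℝ) ^ (1 / r - 1) ≤ (n : ℝ) ^ (1 / r - 1) := by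
      refine Real.rpow_le_rpow_of_nonpos hn0 (by push_cast; linarith) ?_
      rw [sub_nonpos, div_le_one (by linarith)]
      linarith
    have hle2 : ((n + 1 : ℕ) : ℝ) ^ (1 / r - 1) * Mr ≤ (n : ℝ) ^ (1 / r - 1) * max Mr 1 :=
      mul_le_mul hle (le_max_left _ _) hM0 (by positivity)
    rw [e]
    nlinarith [mul_le_mul_of_nonneg_left hle2 hN.le]
  calc _ ≤ ((Measure.pi fun _ : Fin n => Pb).prod Ps)
        {ω : (Fin n → 𝒳 × 𝒴) × (𝒳 × 𝒴) | lowerMass s v ω.1 ω.2 < 1 - α} :=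
        measure_mono fun ω hω => conformal_lowerMass_lt ω.1 s v hv hα.2 ω.2 hω
    _ = ∫⁻ z, Ps {ζ | lowerMass s v z ζ < 1 - α} ∂(Measure.pi fun _ : Fin n => Pb) :=
        Measure.prod_apply hset
    _ ≤ ∫⁻ z, ((∫⁻ ζ in {ζ | lowerMass s v z ζ < 1 - α}, ENNReal.ofReal (v ζ) ∂Pb)
        + ENNReal.ofReal ((1 / 2) * ∫ ζ, |v ζ - (Ps.rnDeriv Pb ζ).toReal| ∂Pb))
          ∂(Measure.pi fun _ : Fin n => Pb) :=
        lintegral_mono fun z =>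
          measure_le_tilted_add Pb Ps hac v hv hvi h1 (measurable_prodMk_left hset)
    _ ≤ ENNReal.ofReal (1 - α + max Mr 1 * (n : ℝ) ^ (1 / r - 1))
        + ENNReal.ofReal ((1 / 2) * ∫ ζ, |v ζ - (Ps.rnDeriv Pb ζ).toReal| ∂Pb) := by
        rw [lintegral_add_right _ measurable_const, lintegral_const, measure_univ, mul_one]
        gcongr
    _ = _ := by
        rw [← ENNReal.ofReal_add (by positivity) hΔ]
        congr 1
        ring
end

section
/- For each m ∈ ℕ let ŵ_m : 𝒵 → [0,∞) and q̂_{α_lo,m}, q̂_{α_hi,m} : 𝒳 → ℝ be measurable, let s_m(x,y) = max{ y − q̂_{α_hi,m}(x), q̂_{α_lo,m}(x) − y }, and let Ĉ_{m,n} be the weighted conformal set built from n i.i.d. P^b calibration points using score s_m and weight function ŵ_m. Assume: (1) lim_{m→∞} E_{P^b}| ŵ_m(X,Y) − w(X,Y) | = 0; (2) there exist r, b_1, b_2 > 0 such that the conditional density p^*(y|x) of P^*_{Y|X=x} (with respect to Lebesgue measure) satisfies b_1 ≤ p^*(y|x) ≤ b_2 for all x and all y ∈ [q_{α_lo}(x)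 − r, q_{α_lo}(x) + r] ∪ [q_{α_hi}(x) − r, q_{α_hi}(x) + r]; (3) there exists k > 0 with lim_{m→∞} E_{X∼P_X}[H_m(X)^k] = 0, where H_m(x) = max{ |q̂_{α_lo,m}(x) − q_{α_lo}(x)|, |q̂_{α_hi,m}(x) − q_{α_hi}(x)| }. Then for every t > 0, lim_{m→∞} lim_{n→∞} ℙ( ℙ_{Y∼P^*_{Y|X}}( Y ∈ Ĉ_{m,n}(X) | X ) ≤ 1 − α − t ) = 0, where the inner conditional probability is over Y ∼ P^*_{Y|X} and the calibration sample, and the outer probability is over X ∼ P_X and the calibration sample. -/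
/-!
The calibration sample enters only through one event. Fix a small `η > 0` and let
`A = {s_m ≤ -2η}`. Whenever the calibration points in `A` carry less than a fraction `1 - α` of
the total calibration weight, the weighted quantile is at least `-2η` for every test point
(`le_wQuantile_of_sum_pos`), so the conformal set contains `{y | s_m (x, y) ≤ -2η}`.

This event is `0 < ∑ i, f (z i)` with `f = ((1 - α) - 1_A) ŵ_m`. By the law of large numbers
(`exists_forall_sum_pos_prob`) it has probability tending to one as `n → ∞` once `f` has positive
mean under `P^b`, and that mean is at least `1 - α - P^*(A) - ‖ŵ_m - w‖₁`
(`integral_weighted_ge`). If `H_m(x) ≤ η`, the slice of `A` at `x` lies in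
`[q_lo + η, q_hi - η]`, so the lower density bound gives it mass at most `1 - α - b1 η`
(`measure_shrunk_le`); as `ℙ(H_m > η) → 0` by Markov's inequality, the mean is positive for
large `m`.

Conversely, if `H_m(x) ≤ η`, then `{y | s_m (x, y) ≤ -2η}` contains `[q_lo + 3η, q_hi - 3η]`, which
has mass at least `1 - α - 6 b2 η` by the upper density bound (`le_measure_shrunk`). Hence
coverage below `1 - α - t` can only occur where `H_m > η`, up to a null set.
-/

open MeasureTheory

/-- The conformalized-quantile-regression score
`s(x,y) = max{y − q̂_hi(x), q̂_lo(x) − y}`. -/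
def cqrScore {𝒳 : Type*} (qloHat qhiHat : 𝒳 → ℝ) : 𝒳 × ℝ → ℝ :=
  fun ζ => max (ζ.2 - qhiHat ζ.1) (qloHat ζ.1 - ζ.2)

open ProbabilityTheory Filter

/-- Lower bound for the weighted quantile: if the calibration points with score at most
`c` carry less than a fraction `1 - α` of the calibration weight, the weighted quantile is at
least `c`, whatever the test point, since the weight of the test point only enlarges the
normalising constant. -/
lemma le_wQuantile_of_sum_pos {Z : Type*} {n : ℕ} (z : Fin n → Z) (s v : Z → ℝ)
    (hv : ∀ ζ, 0 ≤ v ζ) {α : ℝ} (hα : α < 1) (c : ℝ)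
    (hsum : 0 < ∑ i, ((1 - α) * v (z i) - {ζ | s ζ ≤ c}.indicator v (z i))) (ζ : Z) :
    (c : EReal) ≤ wQuantile z s v α ζ := by
  refine le_sInf ?_
  rintro _ ⟨u, rfl, hu⟩
  rw [EReal.coe_le_coe_iff]
  by_contra! huc
  rw [← Finset.sum_div] at hu
  rw [Finset.sum_sub_distrib, ← Finset.mul_sum] at hsum
  have hV : 0 ≤ ∑ j, v (z j) := Finset.sum_nonneg fun i _ => hv _
  have hmono : ∑ i ∈ Finset.univ.filter (fun i => s (z i) ≤ u), v (z i)
      ≤ ∑ i, {ζ | s ζ ≤ c}.indicator v (z i) := by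
    rw [Finset.sum_filter]
    refine Finset.sum_le_sum fun i _ => ?_
    by_cases h : s (z i) ≤ u
    · have h' : z i ∈ {ζ | s ζ ≤ c} := h.trans huc.le
      rw [if_pos h, Set.indicator_of_mem h']
    · rw [if_neg h]
      exact Set.indicator_nonneg (fun ζ _ => hv ζ) _
  rcases (add_nonneg hV (hv ζ)).eq_or_lt with h0 | h0
  · rw [← h0, div_zero] at hu
    linarith
  · rw [le_div_iff₀ h0] at hu
    nlinarith [mul_nonneg (sub_pos.2 hα).le (hv ζ)]

/-- Weak law of large numbers in the form needed here: if `f` has positive mean, the sum of `f` over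
`n` i.i.d. points is positive with probability tending to one. -/
lemma exists_forall_sum_pos_prob {Z : Type*} [MeasurableSpace Z] (P : Measure Z)
    [IsProbabilityMeasure P] (f : Z → ℝ) (hf : Measurable f) (hfi : Integrable f P)
    (hpos : 0 < ∫ ζ, f ζ ∂P) {γ : ℝ} (hγ : 0 < γ) :
    ∃ N : ℕ, ∀ n ≥ N,
      1 - γ ≤ (Measure.pi fun _ : Fin n => P).real {z | 0 < ∑ i, f (z i)} := by
  set Q : Measure (ℕ → Z) := Measure.infinitePi fun _ => P with hQ
  have hmp : ∀ i, MeasurePreserving (fun ω : ℕ → Z => ω i) Q P := fun i =>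
    measurePreserving_eval_infinitePi (fun _ => P) i
  have hX0 : ∫ ω, f (ω 0) ∂Q = ∫ ζ, f ζ ∂P := by
    rw [← (hmp 0).map_eq, integral_map (hmp 0).measurable.aemeasurable hf.aestronglyMeasurable]
  have hident : ∀ i, IdentDistrib (fun ω : ℕ → Z => f (ω i)) (fun ω => f (ω 0)) Q Q := by
    intro i
    refine ⟨(hf.comp (hmp i).measurable).aemeasurable, (hf.comp (hmp 0).measurable).aemeasurable, ?_⟩
    have h : ∀ j, Q.map (fun ω : ℕ → Z => f (ω j)) = P.map f := fun j => by
      rw [← (hmp j).map_eq, Measure.map_map hf (hmp j).measurable]; rfl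
    rw [h, h]
  have hindep : iIndepFun (fun i (ω : ℕ → Z) => f (ω i)) Q :=
    iIndepFun_infinitePi (P := fun _ => P) (X := fun _ => f) fun _ => hf
  have hlln := strong_law_ae_real (μ := Q) (fun i ω => f (ω i))
    ((hmp 0).integrable_comp_of_integrable hfi) (fun i j hij => hindep.indepFun hij) hident
  have hmeas : ∀ n : ℕ, Measurable fun ω : ℕ → Z => (∑ i ∈ Finset.range n, f (ω i)) / (n : ℝ) := by
    intro n; fun_prop
  have htim := tendstoInMeasure_of_tendsto_ae
    (f := fun (n : ℕ) (ω : ℕ → Z) => (∑ i ∈ Finset.range n, f (ω i)) / (n : ℝ))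
    (fun n => (hmeas n).aestronglyMeasurable) hlln
  rw [tendstoInMeasure_iff_dist] at htim
  have hev := (htim _ hpos).eventually (gt_mem_nhds (ENNReal.ofReal_pos.2 hγ))
  obtain ⟨N, hN⟩ := eventually_atTop.1 hev
  refine ⟨N, fun n hn => ?_⟩
  have hG : MeasurableSet {z : Fin n → Z | 0 < ∑ i, f (z i)} :=
    measurableSet_lt measurable_const (by fun_prop)
  have hpi : (Measure.pi fun _ : Fin n => P) = Q.map fun (ω : ℕ → Z) (i : Fin n) => ω i := by
    rw [← Measure.infinitePi_eq_pi]
    exact (Measure.map_infinitePi_infinitePi_of_inj (P := fun _ : ℕ => P) Fin.val_injective).symm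
  have hcompl : (Measure.pi fun _ : Fin n => P).real {z | 0 < ∑ i, f (z i)}ᶜ ≤ γ := by
    refine ENNReal.toReal_le_of_le_ofReal hγ.le (le_trans ?_ (hN n hn).le)
    rw [hpi, Measure.map_apply (by fun_prop) hG.compl]
    refine measure_mono fun ω hω => ?_
    simp only [Set.mem_preimage, Set.mem_compl_iff, Set.mem_ofPred_eq, not_lt,
      Fin.sum_univ_eq_sum_range (fun i => f (ω i))] at hω
    have hle : (∑ i ∈ Finset.range n, f (ω i)) / (n : ℝ) ≤ 0 :=
      div_nonpos_of_nonpos_of_nonneg hω n.cast_nonneg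
    simp only [Set.mem_ofPred_eq, Real.dist_eq, hX0]
    rw [abs_of_nonpos (by linarith)]
    linarith
  rw [probReal_compl_eq_one_sub hG] at hcompl
  linarith

/-- The law with density `p` gives mass at most `αhi - αlo - b1 * η` to the interval between the
quantiles `a`, `b` shrunk by `η` on both sides, provided `p ≥ b1` on `(a, a + η)`: that band is
lost from `(a, b]`. -/
lemma measure_shrunk_le (μ : Measure ℝ) [IsProbabilityMeasure μ] (p : ℝ → ℝ)
    (hp : μ = volume.withDensity fun y => ENNReal.ofReal (p y)) {a b αlo αhi η b1 : ℝ}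
    (hlo : μ.real (Set.Iic a) = αlo) (hhi : μ.real (Set.Iic b) = αhi) (hη : 0 < η)
    (hb1 : 0 < b1) (hsmall : b1 * η ≤ αhi - αlo)
    (hdens : ∀ y ∈ Set.Ioo a (a + η), b1 ≤ p y) :
    μ.real (Set.Icc (a + η) (b - η)) ≤ αhi - αlo - b1 * η := by
  by_cases hne : a + η ≤ b - η
  · have hband : b1 * η ≤ μ.real (Set.Ioo a (a + η)) := by
      have h : ENNReal.ofReal (b1 * η) ≤ μ (Set.Ioo a (a + η)) := by
        rw [hp, withDensity_apply _ measurableSet_Ioo]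
        calc ENNReal.ofReal (b1 * η) = ∫⁻ _ in Set.Ioo a (a + η), ENNReal.ofReal b1 := by
              rw [setLIntegral_const, Real.volume_Ioo, ← ENNReal.ofReal_mul hb1.le]
              congr 2; ring
          _ ≤ _ := by
              refine setLIntegral_mono' measurableSet_Ioo fun y hy => ?_
              exact ENNReal.ofReal_le_ofReal (hdens y hy)
      exact (ENNReal.ofReal_le_iff_le_toReal (measure_ne_top _ _)).1 h
    have hd1 : Disjoint (Set.Iic a) (Set.Ioo a (a + η)) :=
      Set.disjoint_left.2 fun y h1 h2 => absurd h2.1 (not_lt.2 h1)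
    have hd2 : Disjoint (Set.Iic a ∪ Set.Ioo a (a + η)) (Set.Icc (a + η) (b - η)) := by
      refine Set.disjoint_left.2 ?_
      rintro y (h1 | h1) h2
      · have := h2.1; have : y ≤ a := h1; linarith
      · have := h2.1; have := h1.2; linarith
    have hsub : (Set.Iic a ∪ Set.Ioo a (a + η)) ∪ Set.Icc (a + η) (b - η) ⊆ Set.Iic b := by
      rintro y ((h | h) | h)
      · have : y ≤ a := h; show y ≤ b; linarith
      · have := h.2; show y ≤ b; linarith
      · have := h.2; show y ≤ b; linarith
    have := measureReal_mono (μ := μ) hsub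
    rw [measureReal_union hd2 measurableSet_Icc, measureReal_union hd1 measurableSet_Ioo] at this
    linarith
  · rw [Set.Icc_eq_empty hne, measureReal_empty]
    linarith

/-- The law with density `p` gives mass at least `αhi - αlo - 2 * b2 * η` to the interval between
the quantiles `a`, `b` shrunk by `η` on both sides, provided `p ≤ b2` on the two bands cut off. -/
lemma le_measure_shrunk (μ : Measure ℝ) [IsProbabilityMeasure μ] (p : ℝ → ℝ)
    (hp : μ = volume.withDensity fun y => ENNReal.ofReal (p y)) {a b αlo αhi η b2 : ℝ}
    (hlo : μ.real (Set.Iic a) = αlo) (hhi : μ.real (Set.Iic b) = αhi) (hη : 0 < η)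
    (hb2 : 0 < b2) (hdens : ∀ y ∈ Set.Icc a (a + η) ∪ Set.Icc (b - η) b, p y ≤ b2) :
    αhi - αlo - 2 * b2 * η ≤ μ.real (Set.Icc (a + η) (b - η)) := by
  have hband : ∀ c d, d - c = η → (∀ y ∈ Set.Icc c d, p y ≤ b2) →
      μ.real (Set.Icc c d) ≤ b2 * η := by
    intro c d hcd h
    refine ENNReal.toReal_le_of_le_ofReal (by positivity) ?_
    rw [hp, withDensity_apply _ measurableSet_Icc]
    calc _ ≤ ∫⁻ _ in Set.Icc c d, ENNReal.ofReal b2 :=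
          setLIntegral_mono' measurableSet_Icc fun y hy => ENNReal.ofReal_le_ofReal (h y hy)
      _ = ENNReal.ofReal (b2 * η) := by
          rw [setLIntegral_const, Real.volume_Icc, ← ENNReal.ofReal_mul hb2.le, hcd]
  have h1 := hband a (a + η) (by ring) fun y hy => hdens y (Or.inl hy)
  have h2 := hband (b - η) b (by ring) fun y hy => hdens y (Or.inr hy)
  have hsub : Set.Iic b ⊆ ((Set.Iic a ∪ Set.Icc a (a + η)) ∪ Set.Icc (b - η) b)
      ∪ Set.Icc (a + η) (b - η) := by
    intro y hy
    have hy : y ≤ b := hy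
    simp only [Set.mem_union, Set.mem_Iic, Set.mem_Icc]
    grind
  have h3 := measureReal_mono (μ := μ) hsub
  have h4 := measureReal_union_le (μ := μ) ((Set.Iic a ∪ Set.Icc a (a + η)) ∪ Set.Icc (b - η) b)
    (Set.Icc (a + η) (b - η))
  have h5 := measureReal_union_le (μ := μ) (Set.Iic a ∪ Set.Icc a (a + η)) (Set.Icc (b - η) b)
  have h6 := measureReal_union_le (μ := μ) (Set.Iic a) (Set.Icc a (a + η))
  linarith

/-- Markov's inequality for the `k`-th moment: convergence of `E[H_m ^ k]` to zero forces
convergence in probability. -/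
lemma eventually_measureReal_gt_le {𝒳 : Type*} [MeasurableSpace 𝒳] (μ : Measure 𝒳)
    [IsFiniteMeasure μ] (H : ℕ → 𝒳 → ℝ) (hH : ∀ m x, 0 ≤ H m x) {k : ℝ} (hk : 0 < k)
    (hfi : ∀ m, Integrable (fun x => H m x ^ k) μ)
    (hlim : Tendsto (fun m => ∫ x, H m x ^ k ∂μ) atTop (nhds 0))
    {η γ : ℝ} (hη : 0 < η) (hγ : 0 < γ) :
    ∀ᶠ m in atTop, μ.real {x | η < H m x} ≤ γ := by
  have hηk : 0 < η ^ k := Real.rpow_pos_of_pos hη k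
  filter_upwards [hlim.eventually (gt_mem_nhds (mul_pos hηk hγ))] with m hm
  have hmarkov := mul_meas_ge_le_integral_of_nonneg
    (Eventually.of_forall fun x => Real.rpow_nonneg (hH m x) k) (hfi m) (η ^ k)
  have hsub : {x | η < H m x} ⊆ {x | η ^ k ≤ H m x ^ k} := fun x hx =>
    Real.rpow_le_rpow hη.le (le_of_lt hx) hk.le
  have hmono := measureReal_mono (μ := μ) hsub
  exact hmono.trans (le_of_mul_le_mul_left (hmarkov.trans hm.le) hηk)

/-- Weighting by an `L¹`-approximation `v` of the density `dPs/dPb` changes the mean of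
`((1 - α) - 1_A) dPs/dPb`, which is `1 - α - Ps A`, by at most the `L¹` error. -/
lemma integral_weighted_ge {Z : Type*} [MeasurableSpace Z] (Pb Ps : Measure Z)
    [IsProbabilityMeasure Pb] [IsProbabilityMeasure Ps] (hac : Ps ≪ Pb)
    (w : Z → ℝ) (hw : ∀ ζ, w ζ = (Ps.rnDeriv Pb ζ).toReal) (v : Z → ℝ) (hv : Measurable v)
    (hfi : Integrable (fun ζ => |v ζ - w ζ|) Pb) {α : ℝ} (hα : α ∈ Set.Ioo (0 : ℝ) 1)
    {A : Set Z} (hA : MeasurableSet A) :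
    Integrable (fun ζ => (1 - α) * v ζ - A.indicator v ζ) Pb ∧
    1 - α - Ps.real A - ∫ ζ, |v ζ - w ζ| ∂Pb
      ≤ ∫ ζ, ((1 - α) * v ζ - A.indicator v ζ) ∂Pb := by
  have hw' : w = fun ζ => (Ps.rnDeriv Pb ζ).toReal := funext hw
  have hwm : Measurable w := hw' ▸ (Measure.measurable_rnDeriv Ps Pb).ennreal_toReal
  have hwint : Integrable w Pb := hw' ▸ Measure.integrable_toReal_rnDeriv
  have hvw : Integrable (fun ζ => v ζ - w ζ) Pb :=
    (integrable_norm_iff (hv.sub hwm).aestronglyMeasurable).1 hfi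
  have hvint : Integrable v Pb := by
    refine (hvw.add hwint).congr (Eventually.of_forall fun ζ => ?_)
    simp
  have hf : ∀ u : Z → ℝ, Integrable u Pb →
      Integrable (fun ζ => (1 - α) * u ζ - A.indicator u ζ) Pb :=
    fun u hu => (hu.const_mul _).sub (hu.indicator hA)
  refine ⟨hf v hvint, ?_⟩
  have hiw : ∫ ζ, ((1 - α) * w ζ - A.indicator w ζ) ∂Pb = 1 - α - Ps.real A := by
    rw [integral_sub (hwint.const_mul _) (hwint.indicator hA), integral_const_mul,
      integral_indicator hA, hw', Measure.setIntegral_toReal_rnDeriv hac,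
      Measure.integral_toReal_rnDeriv hac]
    simp
  rw [← hiw, ← integral_sub (hf w hwint) hfi]
  refine integral_mono ((hf w hwint).sub hfi) (hf v hvint) fun ζ => ?_
  obtain ⟨h0, h1⟩ := hα
  -- the multiplier `(1 - α) - 1_A` has absolute value at most one
  by_cases hζ : ζ ∈ A
  · simp only [Set.indicator_of_mem hζ]
    nlinarith [neg_abs_le (v ζ - w ζ), le_abs_self (v ζ - w ζ), abs_nonneg (v ζ - w ζ)]
  · simp only [Set.indicator_of_notMem hζ]
    nlinarith [neg_abs_le (v ζ - w ζ), le_abs_self (v ζ - w ζ), abs_nonneg (v ζ - w ζ)]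

/-- If, outside a set `B` of covariates, almost every conditional slice of `A` has mass at most `c`,
then `A` has mass at most `c` plus the mass of `B`; `B` need not be measurable. -/
lemma measureReal_le_of_condKernel_le {𝒳 : Type*} [MeasurableSpace 𝒳]
    (ρ : Measure (𝒳 × ℝ)) [IsProbabilityMeasure ρ] {A : Set (𝒳 × ℝ)} (hA : MeasurableSet A)
    (B : Set 𝒳) {c : ℝ} (hc : 0 ≤ c)
    (h : ∀ᵐ x ∂ρ.fst, x ∉ B → (ρ.condKernel x).real {y | (x, y) ∈ A} ≤ c) :
    ρ.real A ≤ c + ρ.fst.real B := by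
  have key : ρ A ≤ ENNReal.ofReal c + ρ.fst B := by
    rw [← Measure.lintegral_condKernel_mem hA]
    calc ∫⁻ x, ρ.condKernel x {y | (x, y) ∈ A} ∂ρ.fst
        ≤ ∫⁻ x, (ENNReal.ofReal c + B.indicator 1 x) ∂ρ.fst := by
          refine lintegral_mono_ae ?_
          filter_upwards [h] with x hx
          by_cases hB : x ∈ B
          · rw [Set.indicator_of_mem hB]
            exact prob_le_one.trans le_add_self
          · refine le_trans ?_ le_self_add
            exact (ENNReal.le_ofReal_iff_toReal_le (measure_ne_top _ _) hc).2 (hx hB)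
      _ = ENNReal.ofReal c + ∫⁻ x, B.indicator 1 x ∂ρ.fst := by
          rw [lintegral_add_left measurable_const]; simp
      _ ≤ ENNReal.ofReal c + ρ.fst B := by
          gcongr
          exact lintegral_indicator_one_le B
  have := ENNReal.toReal_mono (by finiteness) key
  rwa [ENNReal.toReal_add (by finiteness) (by finiteness), ENNReal.toReal_ofReal hc] at this

/-- Asymptotic conditional coverage of weighted conformal prediction: if the estimated
weights `ŵ_m` are `L¹(P^b)`-consistent, the target conditional density is bounded on
neighbourhoods of the conditional quantiles `q_lo, q_hi`, and the estimated quantile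
functions are consistent in the sense that `E[H_m(X)^k] → 0`, then for every `t > 0` the
probability (over `X ∼ P_X`) that the conditional coverage
`ℙ_{Y ∼ P^*_{Y|X}}(Y ∈ Ĉ_{m,n}(X) | X)` falls below `1 − α − t` vanishes as first
`n → ∞` and then `m → ∞`. -/
theorem asymptotic_conditional_coverage
    {𝒳 : Type*} [MeasurableSpace 𝒳] [StandardBorelSpace 𝒳]
    (Pb Ps : Measure (𝒳 × ℝ)) [IsProbabilityMeasure Pb] [IsProbabilityMeasure Ps]
    (hmarg : Pb.fst = Ps.fst)
    (hac : Ps ≪ Pb)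
    (w : 𝒳 × ℝ → ℝ) (hw : ∀ ζ, w ζ = (Ps.rnDeriv Pb ζ).toReal)
    (α αlo αhi : ℝ) (hα : α ∈ Set.Ioo (0 : ℝ) 1)
    (hαlo : αlo ∈ Set.Ioo (0 : ℝ) 1) (hαhi : αhi ∈ Set.Ioo (0 : ℝ) 1)
    (hαdiff : αhi - αlo = 1 - α)
    -- the conditional quantile functions of `Y | X` under the target law
    (qlo qhi : 𝒳 → ℝ)
    (hqlo : ∀ᵐ x ∂Ps.fst, Ps.condKernel x (Set.Iic (qlo x)) = ENNReal.ofReal αlo)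
    (hqhi : ∀ᵐ x ∂Ps.fst, Ps.condKernel x (Set.Iic (qhi x)) = ENNReal.ofReal αhi)
    -- the conditional density of `Y | X = x` under the target law
    (pdens : 𝒳 → ℝ → ℝ)
    (hpdens : ∀ x, Ps.condKernel x
      = volume.withDensity fun y => ENNReal.ofReal (pdens x y))
    -- estimated weight functions and quantile functions (trained on `m` samples)
    (wHat : ℕ → 𝒳 × ℝ → ℝ)
    (hwHatMeas : ∀ m, Measurable (wHat m)) (hwHatNonneg : ∀ m ζ, 0 ≤ wHat m ζ)
    (qloHat qhiHat : ℕ → 𝒳 → ℝ)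
    (hqloHatMeas : ∀ m, Measurable (qloHat m)) (hqhiHatMeas : ∀ m, Measurable (qhiHat m))
    (H : ℕ → 𝒳 → ℝ)
    (hH : ∀ m x, H m x = max |qloHat m x - qlo x| |qhiHat m x - qhi x|)
    -- Assumption 1: `L¹`-consistency of the estimated weights
    (h1 : Filter.Tendsto (fun m => ∫ ζ, |wHat m ζ - w ζ| ∂Pb)
      Filter.atTop (nhds 0))
    (h1int : ∀ m, Integrable (fun ζ => |wHat m ζ - w ζ|) Pb)
    -- Assumption 2: the conditional density is bounded near the conditional quantiles
    (r b1 b2 : ℝ) (hr : 0 < r) (hb1 : 0 < b1) (hb2 : 0 < b2)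
    (h2 : ∀ x y,
      y ∈ Set.Icc (qlo x - r) (qlo x + r) ∪ Set.Icc (qhi x - r) (qhi x + r) →
      pdens x y ∈ Set.Icc b1 b2)
    -- Assumption 3: consistency of the estimated quantile functions
    (k : ℝ) (hk : 0 < k)
    (h3int : ∀ m, Integrable (fun x => H m x ^ k) Ps.fst)
    (h3 : Filter.Tendsto (fun m => ∫ x, H m x ^ k ∂Ps.fst)
      Filter.atTop (nhds 0)) :
    ∀ t > (0 : ℝ), ∀ ε > (0 : ℝ), ∃ M : ℕ, ∀ m ≥ M, ∃ N : ℕ, ∀ n ≥ N,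
      (Ps.fst {x : 𝒳 |
          (((Measure.pi fun _ : Fin n => Pb).prod (Ps.condKernel x))
            {ω : (Fin n → 𝒳 × ℝ) × ℝ |
              ω.2 ∈ conformalSet ω.1 (cqrScore (qloHat m) (qhiHat m)) (wHat m) α x}).toReal
          ≤ 1 - α - t}).toReal ≤ ε := by
  intro t ht ε hε
  obtain ⟨hα0, hα1⟩ := hα
  -- `η` is the tolerance for the estimated quantiles; the scores are compared with `-2η`
  obtain ⟨η, hη, hηr, hηb1, hηb2⟩ : ∃ η : ℝ, 0 < η ∧ 3 * η ≤ r ∧ b1 * η ≤ 1 - α ∧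
      2 * b2 * (3 * η) ≤ t / 4 := by
    refine ⟨min (r / 3) (min ((1 - α) / b1) (t / (24 * b2))), ?_, ?_, ?_, ?_⟩
    · have := sub_pos.2 hα1
      positivity
    · have := min_le_left (r / 3) (min ((1 - α) / b1) (t / (24 * b2)))
      linarith
    · have : min (r / 3) (min ((1 - α) / b1) (t / (24 * b2))) ≤ (1 - α) / b1 :=
        (min_le_right _ _).trans (min_le_left _ _)
      rw [le_div_iff₀ hb1] at this
      linarith
    · have : min (r / 3) (min ((1 - α) / b1) (t / (24 * b2))) ≤ t / (24 * b2) :=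
        (min_le_right _ _).trans (min_le_right _ _)
      rw [le_div_iff₀ (by positivity)] at this
      linarith
  have hHnn : ∀ m x, 0 ≤ H m x := fun m x => by rw [hH]; positivity
  have hlo : ∀ᵐ x ∂Ps.fst, (Ps.condKernel x).real (Set.Iic (qlo x)) = αlo := by
    filter_upwards [hqlo] with x hx
    rw [measureReal_def, hx, ENNReal.toReal_ofReal hαlo.1.le]
  have hhi : ∀ᵐ x ∂Ps.fst, (Ps.condKernel x).real (Set.Iic (qhi x)) = αhi := by
    filter_upwards [hqhi] with x hx
    rw [measureReal_def, hx, ENNReal.toReal_ofReal hαhi.1.le]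
  have hb1η : 0 < b1 * η := mul_pos hb1 hη
  have hev1 := eventually_measureReal_gt_le Ps.fst H hHnn hk h3int h3 hη
    (γ := min ε (b1 * η / 3)) (by positivity)
  have hev2 := h1.eventually (gt_mem_nhds (show (0 : ℝ) < b1 * η / 3 by positivity))
  obtain ⟨M, hM⟩ := eventually_atTop.1 (hev1.and hev2)
  refine ⟨M, fun m hm => ?_⟩
  obtain ⟨hHm, hem⟩ := hM m hm
  have hclose : ∀ x, ¬ η < H m x → |qloHat m x - qlo x| ≤ η ∧ |qhiHat m x - qhi x| ≤ η := by
    intro x hx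
    rw [hH, not_lt] at hx
    exact max_le_iff.1 hx
  set s := cqrScore (qloHat m) (qhiHat m) with hs
  have hsm : Measurable s := by
    have := hqloHatMeas m
    have := hqhiHatMeas m
    rw [hs]
    unfold cqrScore
    fun_prop
  set A : Set (𝒳 × ℝ) := {ζ | s ζ ≤ -(2 * η)} with hAdef
  have hA : MeasurableSet A := measurableSet_le hsm measurable_const
  have hPsA : Ps.real A ≤ (1 - α - b1 * η) + Ps.fst.real {x | η < H m x} := by
    refine measureReal_le_of_condKernel_le Ps hA _ (by linarith) ?_
    filter_upwards [hlo, hhi] with x hxlo hxhi hx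
    obtain ⟨hc1, hc2⟩ := hclose x hx
    have hb := measure_shrunk_le (Ps.condKernel x) (pdens x) (hpdens x) hxlo hxhi hη hb1
      (by linarith) (fun y hy => (h2 x y (Or.inl ⟨by linarith [hy.1], by linarith [hy.2]⟩)).1)
    rw [hαdiff] at hb
    refine (measureReal_mono ?_).trans hb
    intro y hy
    have hy' : max (y - qhiHat m x) (qloHat m x - y) ≤ -(2 * η) := hy
    obtain ⟨hy1, hy2⟩ := max_le_iff.1 hy'
    rw [abs_le] at hc1 hc2
    exact ⟨by linarith, by linarith⟩
  obtain ⟨hfint, hfge⟩ := integral_weighted_ge Pb Ps hac w hw (wHat m) (hwHatMeas m) (h1int m)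
    ⟨hα0, hα1⟩ hA
  have hHε := hHm.trans (min_le_left _ _)
  have hHb := hHm.trans (min_le_right _ _)
  obtain ⟨N, hN⟩ := exists_forall_sum_pos_prob Pb
    (fun ζ => (1 - α) * wHat m ζ - A.indicator (wHat m) ζ)
    (((hwHatMeas m).const_mul _).sub ((hwHatMeas m).indicator hA)) hfint (by linarith)
    (γ := t / 4) (by positivity)
  refine ⟨N, fun n hn => le_trans ?_ hHε⟩
  have hG := hN n hn
  set G : Set (Fin n → 𝒳 × ℝ) :=
    {z | 0 < ∑ i, ((1 - α) * wHat m (z i) - A.indicator (wHat m) (z i))} with hGdef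
  refine ENNReal.toReal_mono (measure_ne_top _ _) (measure_mono_ae ?_)
  filter_upwards [hlo, hhi] with x hxlo hxhi hbad
  have hbad : ((Measure.pi fun _ : Fin n => Pb).prod (Ps.condKernel x)).real
      {ω : (Fin n → 𝒳 × ℝ) × ℝ | ω.2 ∈ conformalSet ω.1 s (wHat m) α x} ≤ 1 - α - t := hbad
  show η < H m x
  by_contra hx
  obtain ⟨hc1, hc2⟩ := hclose x hx
  rw [abs_le] at hc1 hc2
  set I := Set.Icc (qlo x + 3 * η) (qhi x - 3 * η) with hI
  have hIge : αhi - αlo - 2 * b2 * (3 * η) ≤ (Ps.condKernel x).real I := by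
    refine le_measure_shrunk (Ps.condKernel x) (pdens x) (hpdens x) hxlo hxhi (by positivity)
      hb2 fun y hy => (h2 x y ?_).2
    rcases hy with hy | hy
    · exact Or.inl ⟨by linarith [hy.1], by linarith [hy.2]⟩
    · exact Or.inr ⟨by linarith [hy.1], by linarith [hy.2]⟩
  have hsub : G ×ˢ I ⊆ {ω : (Fin n → 𝒳 × ℝ) × ℝ | ω.2 ∈ conformalSet ω.1 s (wHat m) α x} := by
    rintro ⟨z, y⟩ ⟨hz, hy⟩
    have hsy : s (x, y) ≤ -(2 * η) := by
      have h1 : y ≤ qhi x - 3 * η := hy.2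
      have h2 : qlo x + 3 * η ≤ y := hy.1
      exact max_le (by show y - qhiHat m x ≤ _; linarith) (by show qloHat m x - y ≤ _; linarith)
    exact (EReal.coe_le_coe_iff.2 hsy).trans
      (le_wQuantile_of_sum_pos z s (wHat m) (hwHatNonneg m) hα1 _ hz (x, y))
  have hprod := measureReal_mono
    (μ := (Measure.pi fun _ : Fin n => Pb).prod (Ps.condKernel x)) hsub
  rw [measureReal_prod_prod] at hprod
  have hI1 : (Ps.condKernel x).real I ≤ 1 := measureReal_le_one
  have hI0 : 0 ≤ (Ps.condKernel x).real I := measureReal_nonneg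
  nlinarith [mul_le_mul_of_nonneg_right hG hI0]
end

section
/- Let Ω_1,…,Ω_k be measurable subsets of 𝒵 with ℙ_{(X,Y)∼P^*}((X,Y) ∈ Ω_j) > 0 for each j ∈ {1,…,k}. Let (X_1,Y_1),…,(X_n,Y_n) be i.i.d. with law P^b and (X,Y) ∼ P^* independent of them. For each j, let η^{Ω_j}(x,y) be the weighted (1−α)-quantile computed using only the calibration points that fall in Ω_j (with exact weights w), define Ĉ_n^{Ω_j}(x) = { y : (x,y) ∈ Ω_j and s(x,y) ≤ η^{Ω_j}(x,y) }, and set Ĉ_n^{Ω}(x) = ∪_{j=1}^k Ĉ_n^{Ω_j}(x). Then for every j ∈ {1,…,k}, ℙ( Y ∈ Ĉ_n^{Ω}(X) | (X,Y) ∈ Ω_j ) ≥ 1 − α, the probability being over the calibration sample and (X,Y) ∼ P^*. -/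
/-!
Fix a group `Ω` and put `g = w · 1_Ω`. A test point `ζ ∈ Ω` that is not covered satisfies
`(1 - α) (g ζ + ∑ g (z i)) ≤ ∑_{s (z i) < s ζ} g (z i)`, so it suffices to bound the probability
of this measurable event on `{ζ ∈ Ω}` by `α P^*(Ω)`.

Changing measure from `P^*` to `P^b` turns that probability into the integral of `g ζ` over the
event, under `n + 1` i.i.d. points of law `P^b`. By exchangeability the test point may be placed at
any index `i : Fin (n + 1)`, so `n + 1` times the probability is the expectation of
`∑ i, g (Z i) 1{event at i}`. This sum is at most `α ∑ i, g (Z i)` pointwise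
(`sum_miscovered_le`): every miscovered index has score at least that of the miscovered index of
smallest score, below which a fraction `1 - α` of the total mass already lies. Since
`E[g (Z i)] = P^*(Ω)`, dividing by `n + 1` gives the bound.
-/

open MeasureTheory ProbabilityTheory

open scoped ProbabilityTheory

/-- The weighted `(1-α)`-quantile of the non-conformity scores `s (z i)`, computed using
only the calibration points with index in `I`, with weight function `v`, evaluated at the
candidate test point `ζ`; it is `+∞` (in `EReal`) if the weighted empirical CDF never
reaches `1 - α`. -/
noncomputable def wQuantileOn {Z : Type*} {n : ℕ} (z : Fin n → Z) (I : Finset (Fin n))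
    (s : Z → ℝ) (v : Z → ℝ) (α : ℝ) (ζ : Z) : EReal :=
  sInf {t : EReal | ∃ u : ℝ, t = (u : EReal) ∧
    1 - α ≤ ∑ i ∈ I.filter (fun i => s (z i) ≤ u),
      v (z i) / ((∑ j ∈ I, v (z j)) + v ζ)}

open Classical in
/-- The group conformal set `Ĉ_n^{Ω}(x)` : those `y` with `(x,y) ∈ Ω` whose score is at
most the weighted quantile computed from the calibration points falling in `Ω`. -/
noncomputable def groupConformalSet {𝒳 𝒴 : Type*} {n : ℕ} (z : Fin n → 𝒳 × 𝒴)
    (s : 𝒳 × 𝒴 → ℝ) (v : 𝒳 × 𝒴 → ℝ) (α : ℝ) (Ω : Set (𝒳 × 𝒴)) (x : 𝒳) : Set 𝒴 :=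
  {y | (x, y) ∈ Ω ∧
    (s (x, y) : EReal) ≤
      wQuantileOn z (Finset.univ.filter fun i => z i ∈ Ω) s v α (x, y)}

/-- The indices whose strictly smaller scores already carry a `1 - α` fraction of the total
mass have together at most an `α` fraction of it. -/
lemma sum_miscovered_le {ι : Type*} [Fintype ι] (g s : ι → ℝ) (hg : ∀ i, 0 ≤ g i)
    {α : ℝ} (hα : 0 ≤ α) :
    ∑ i, (if (1 - α) * ∑ l, g l ≤ ∑ l, (if s l < s i then g l else 0) then g i else 0)
      ≤ α * ∑ l, g l := by
  classical
  set T := Finset.univ.filter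
    (fun i => (1 - α) * ∑ l, g l ≤ ∑ l, (if s l < s i then g l else 0)) with hT
  rw [← Finset.sum_filter, ← hT]
  rcases T.eq_empty_or_nonempty with h | h
  · rw [h, Finset.sum_empty]
    exact mul_nonneg hα (Finset.sum_nonneg fun i _ => hg i)
  · obtain ⟨a, haT, ha⟩ := T.exists_min_image s h
    have ha' : (1 - α) * ∑ l, g l ≤ ∑ l, (if s l < s a then g l else 0) :=
      (Finset.mem_filter.1 haT).2
    have key : ∑ i ∈ T, g i + ∑ l, (if s l < s a then g l else 0) ≤ ∑ l, g l := by
      rw [← Finset.sum_filter, ← Finset.sum_union]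
      · exact Finset.sum_le_sum_of_subset_of_nonneg (Finset.subset_univ _) fun i _ _ => hg i
      · rw [Finset.disjoint_left]
        intro i hi hi'
        exact absurd (Finset.mem_filter.1 hi').2 (not_lt.2 (ha i hi))
    linarith

/-- The event that the calibration points `ω.1` with score strictly below that of the test point
`ω.2` carry at least a `1 - α` fraction of the total `g`-mass. -/
def miscovered {Z : Type*} {n : ℕ} (g s : Z → ℝ) (α : ℝ) : Set ((Fin n → Z) × Z) :=
  {ω | (1 - α) * (g ω.2 + ∑ i, g (ω.1 i)) ≤ ∑ i, (if s (ω.1 i) < s ω.2 then g (ω.1 i) else 0)}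

lemma measurableSet_miscovered {Z : Type*} [MeasurableSpace Z] {n : ℕ} {g s : Z → ℝ}
    (hg : Measurable g) (hs : Measurable s) (α : ℝ) :
    MeasurableSet (miscovered (n := n) g s α) := by
  refine measurableSet_le (by fun_prop) (Finset.measurable_sum _ fun i _ => ?_)
  exact Measurable.ite (measurableSet_lt (by fun_prop) (by fun_prop)) (by fun_prop) (by fun_prop)

/-- Exchangeability: the test point may be placed at any index `i` of an i.i.d. sample of
size `n + 1`. -/
lemma lintegral_prod_eq_succAbove {Z : Type*} [MeasurableSpace Z] (P : Measure Z)
    [IsProbabilityMeasure P] {n : ℕ} (i : Fin (n + 1)) {F : (Fin n → Z) × Z → ENNReal}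
    (hF : Measurable F) :
    ∫⁻ ω, F ω ∂((Measure.pi fun _ : Fin n => P).prod P)
      = ∫⁻ z, F (fun l => z (i.succAbove l), z i) ∂(Measure.pi fun _ : Fin (n + 1) => P) := by
  rw [← lintegral_prod_swap]
  exact ((measurePreserving_piFinSuccAbove (fun _ : Fin (n + 1) => P) i).lintegral_comp
    (f := fun p => F p.swap) (hF.comp measurable_swap)).symm

lemma lintegral_miscovered_le {Z : Type*} [MeasurableSpace Z] (P : Measure Z)
    [IsProbabilityMeasure P] (n : ℕ) {g s : Z → ℝ} (hg : Measurable g) (hs : Measurable s)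
    (hg0 : ∀ z, 0 ≤ g z) {α : ℝ} (hα : 0 ≤ α) :
    ∫⁻ ω, (miscovered g s α).indicator (fun ω => ENNReal.ofReal (g ω.2)) ω
        ∂((Measure.pi fun _ : Fin n => P).prod P)
      ≤ ENNReal.ofReal α * ∫⁻ z, ENNReal.ofReal (g z) ∂P := by
  classical
  set F : (Fin n → Z) × Z → ENNReal :=
    (miscovered g s α).indicator (fun ω => ENNReal.ofReal (g ω.2)) with hFdef
  have hF : Measurable F :=
    Measurable.indicator (by fun_prop) (measurableSet_miscovered hg hs α)
  have hpt : ∀ z : Fin (n + 1) → Z, ∑ i, F (fun l => z (i.succAbove l), z i)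
      ≤ ENNReal.ofReal α * ∑ i, ENNReal.ofReal (g (z i)) := by
    intro z
    have hterm : ∀ i, F (fun l => z (i.succAbove l), z i)
        = ENNReal.ofReal (if (1 - α) * ∑ l, g (z l)
            ≤ ∑ l, (if s (z l) < s (z i) then g (z l) else 0) then g (z i) else 0) := by
      intro i
      rw [Fin.sum_univ_succAbove (fun l => g (z l)) i,
        Fin.sum_univ_succAbove (fun l => if s (z l) < s (z i) then g (z l) else 0) i]
      simp only [hFdef, Set.indicator_apply, miscovered, Set.mem_ofPred_eq, lt_irrefl, if_false,
        zero_add, apply_ite ENNReal.ofReal, ENNReal.ofReal_zero]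
    simp_rw [hterm]
    rw [← ENNReal.ofReal_sum_of_nonneg, ← ENNReal.ofReal_sum_of_nonneg, ← ENNReal.ofReal_mul hα]
    · exact ENNReal.ofReal_le_ofReal
        (sum_miscovered_le (fun i => g (z i)) (fun i => s (z i)) (fun i => hg0 _) hα)
    · exact fun i _ => hg0 _
    · intro i _
      split_ifs
      exacts [hg0 _, le_rfl]
  have hint := lintegral_mono (μ := Measure.pi fun _ : Fin (n + 1) => P) hpt
  rw [lintegral_finsetSum _ (fun i _ => by fun_prop), lintegral_const_mul _ (by fun_prop),
    lintegral_finsetSum _ (fun i _ => by fun_prop)] at hint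
  simp_rw [← lintegral_prod_eq_succAbove P _ hF] at hint
  have hmarg : ∀ i : Fin (n + 1), ∫⁻ z, ENNReal.ofReal (g (z i))
      ∂(Measure.pi fun _ : Fin (n + 1) => P) = ∫⁻ z, ENNReal.ofReal (g z) ∂P := fun i =>
    (measurePreserving_eval (fun _ : Fin (n + 1) => P) i).lintegral_comp
      (f := fun z => ENNReal.ofReal (g z)) (by fun_prop)
  simp_rw [hmarg] at hint
  simp only [Finset.sum_const, Finset.card_univ, Fintype.card_fin, nsmul_eq_mul] at hint
  rw [mul_left_comm] at hint
  exact (ENNReal.mul_le_mul_iff_right (by simp) (by simp)).1 hint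

/-- A point of the group that the group conformal set does not cover is miscovered in the sense of
`miscovered`, for the weights restricted to the group. -/
lemma mem_miscovered_of_not_mem {𝒳 𝒴 : Type*} {n : ℕ} (s w : 𝒳 × 𝒴 → ℝ) (hw : ∀ z, 0 ≤ w z)
    {α : ℝ} (hα : α < 1) (Ω : Set (𝒳 × 𝒴)) (ω : (Fin n → 𝒳 × 𝒴) × (𝒳 × 𝒴)) (hω : ω.2 ∈ Ω)
    (h : ω.2.2 ∉ groupConformalSet ω.1 s w α Ω ω.2.1) :
    ω ∈ miscovered (Ω.indicator w) s α := by
  classical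
  obtain ⟨z, x, y⟩ := ω
  simp only [groupConformalSet, Set.mem_ofPred_eq, not_and, not_le] at h hω ⊢
  obtain ⟨_, ⟨u, rfl, hu⟩, hlt⟩ := sInf_lt_iff.1 (h hω)
  rw [EReal.coe_lt_coe_iff] at hlt
  rw [← Finset.sum_div, Finset.filter_filter, Finset.sum_filter, Finset.sum_filter] at hu
  have hW : (∑ j, if z j ∈ Ω then w (z j) else 0) = ∑ j, Ω.indicator w (z j) :=
    Finset.sum_congr rfl fun j _ => by simp [Set.indicator_apply]
  have hζ : w (x, y) = Ω.indicator w (x, y) := by simp [hω]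
  have hg0 : ∀ z, 0 ≤ Ω.indicator w z := Set.indicator_nonneg fun z _ => hw z
  have hden : 0 ≤ (∑ j, Ω.indicator w (z j)) + Ω.indicator w (x, y) :=
    add_nonneg (Finset.sum_nonneg fun j _ => hg0 _) (hg0 _)
  -- A vanishing total weight would make the quotient `0 < 1 - α`.
  have hden' : 0 < (∑ j, Ω.indicator w (z j)) + Ω.indicator w (x, y) := by
    refine lt_of_le_of_ne hden fun h0 => ?_
    rw [hW, hζ, ← h0, div_zero] at hu
    linarith
  rw [hW, hζ, le_div_iff₀ hden'] at hu
  simp only [miscovered, Set.mem_ofPred_eq]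
  rw [add_comm]
  refine hu.trans (Finset.sum_le_sum fun i _ => ?_)
  by_cases h1 : z i ∈ Ω <;> by_cases h2 : s (z i) ≤ u
  · simp [h1, h2, h2.trans_lt hlt]
  all_goals
    simp only [h1, h2, and_true, and_false, if_false]
    split_ifs
    exacts [hg0 _, le_rfl]

/-- Group-balanced coverage: running weighted conformal prediction (with exact weights
`w = dP^*/dP^b`) separately on each group `Ω_j` and taking the union of the resulting
sets yields, for every group `j`, conditional coverage
`ℙ(Y ∈ Ĉ_n^Ω(X) | (X,Y) ∈ Ω_j) ≥ 1 − α`. -/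
theorem group_balanced_conformal_coverage
    {𝒳 𝒴 : Type*} [MeasurableSpace 𝒳] [MeasurableSpace 𝒴]
    [StandardBorelSpace 𝒳] [StandardBorelSpace 𝒴]
    (Pb Ps : Measure (𝒳 × 𝒴)) [IsProbabilityMeasure Pb] [IsProbabilityMeasure Ps]
    (hac : Ps ≪ Pb)
    (w : 𝒳 × 𝒴 → ℝ) (hw : ∀ ζ, w ζ = (Ps.rnDeriv Pb ζ).toReal)
    (s : 𝒳 × 𝒴 → ℝ) (hs : Measurable s)
    (α : ℝ) (hα : α ∈ Set.Ioo (0 : ℝ) 1)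
    (k : ℕ) (Ω : Fin k → Set (𝒳 × 𝒴))
    (hΩmeas : ∀ j, MeasurableSet (Ω j))
    (hΩpos : ∀ j, 0 < Ps (Ω j))
    (n : ℕ) (j : Fin k) :
    ENNReal.ofReal (1 - α) ≤
      (((Measure.pi fun _ : Fin n => Pb).prod Ps)[|
          {ω : (Fin n → 𝒳 × 𝒴) × (𝒳 × 𝒴) | ω.2 ∈ Ω j}])
        {ω : (Fin n → 𝒳 × 𝒴) × (𝒳 × 𝒴) |
          ω.2.2 ∈ ⋃ j' : Fin k, groupConformalSet ω.1 s w α (Ω j') ω.2.1} := by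
  have hw0 : ∀ z, 0 ≤ w z := fun z => by rw [hw]; exact ENNReal.toReal_nonneg
  have hwm : Measurable w := by
    rw [funext hw]
    exact (Measure.measurable_rnDeriv Ps Pb).ennreal_toReal
  have hPs : Ps = Pb.withDensity (fun z => ENNReal.ofReal (w z)) := by
    conv_lhs => rw [← Measure.withDensity_rnDeriv_eq Ps Pb hac]
    refine withDensity_congr_ae ?_
    filter_upwards [Measure.rnDeriv_lt_top Ps Pb] with z hz
    rw [hw, ENNReal.ofReal_toReal hz.ne]
  set g := (Ω j).indicator w with hg
  have hgm : Measurable g := hwm.indicator (hΩmeas j)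
  have hg0 : ∀ z, 0 ≤ g z := Set.indicator_nonneg fun z _ => hw0 z
  have hgof : ∀ z, (Ω j).indicator (fun z => ENNReal.ofReal (w z)) z = ENNReal.ofReal (g z) := by
    intro z
    by_cases hz : z ∈ Ω j <;> simp [hg, hz]
  set μ := Measure.pi fun _ : Fin n => Pb with hμ
  set A : Set ((Fin n → 𝒳 × 𝒴) × (𝒳 × 𝒴)) := {ω | ω.2 ∈ Ω j} with hA
  have hAm : MeasurableSet A := measurable_snd (hΩmeas j)
  have hBm := measurableSet_miscovered (n := n) hgm hs α
  have hPA : (μ.prod Ps) A = Ps (Ω j) := by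
    have : A = Set.univ ×ˢ Ω j := by ext; simp [hA]
    rw [this, Measure.prod_prod, measure_univ, one_mul]
  have hbad : (μ.prod Ps) (A ∩ miscovered g s α) ≤ ENNReal.ofReal α * Ps (Ω j) := by
    have h1 : Ps (Ω j) = ∫⁻ z, ENNReal.ofReal (g z) ∂Pb := by
      conv_lhs => rw [hPs]
      rw [withDensity_apply _ (hΩmeas j), ← lintegral_indicator (hΩmeas j)]
      exact lintegral_congr hgof
    have h2 : (μ.prod Ps) (A ∩ miscovered g s α)
        = ∫⁻ ω, (miscovered g s α).indicator (fun ω => ENNReal.ofReal (g ω.2)) ω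
          ∂(μ.prod Pb) := by
      have : SFinite (Pb.withDensity fun z => ENNReal.ofReal (w z)) := hPs ▸ inferInstance
      conv_lhs => rw [hPs]
      rw [prod_withDensity_right (by fun_prop), withDensity_apply _ (hAm.inter hBm),
        ← lintegral_indicator (hAm.inter hBm)]
      refine lintegral_congr fun ω => ?_
      rw [Set.inter_comm, ← Set.indicator_indicator]
      congr 1
      funext ω
      exact hgof ω.2
    rw [h2, h1]
    exact lintegral_miscovered_le Pb n hgm hs hg0 hα.1.le
  rw [cond_apply hAm, hPA]
  set p := Ps (Ω j) with hp
  have hptop : p ≠ ⊤ := measure_ne_top _ _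
  have hcov : ENNReal.ofReal (1 - α) * p ≤ (μ.prod Ps) (A ∩
      {ω | ω.2.2 ∈ ⋃ j' : Fin k, groupConformalSet ω.1 s w α (Ω j') ω.2.1}) := by
    calc ENNReal.ofReal (1 - α) * p
        = p - ENNReal.ofReal α * p := by
          rw [ENNReal.ofReal_sub _ hα.1.le, ENNReal.ofReal_one,
            ENNReal.sub_mul (fun _ _ => hptop), one_mul]
      _ ≤ (μ.prod Ps) A - (μ.prod Ps) (A ∩ miscovered g s α) := by
          rw [hPA]
          exact tsub_le_tsub_left hbad _
      _ ≤ (μ.prod Ps) (A \ (A ∩ miscovered g s α)) := le_measure_sdiff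
      _ ≤ _ := by
          refine measure_mono fun ω hω => ⟨hω.1, Set.mem_iUnion.2 ⟨j, ?_⟩⟩
          by_contra hnot
          exact hω.2 ⟨hω.1, mem_miscovered_of_not_mem s w hw0 hα.2 (Ω j) ω hω.1 hnot⟩
  calc ENNReal.ofReal (1 - α)
      = p⁻¹ * (ENNReal.ofReal (1 - α) * p) := by
        rw [mul_left_comm, ENNReal.inv_mul_cancel (hΩpos j).ne' hptop, mul_one]
    _ ≤ _ := by gcongr
end

section
/- Suppose 𝒴 is a finite set and ℙ_{(X,Y)∼P^*}(Y = y) > 0 for every y ∈ 𝒴. Let (X_1,Y_1),…,(X_n,Y_n) be i.i.d. with law P^b and (X,Y) ∼ P^* independent of them. For each y ∈ 𝒴, let η(x,y) be the weighted (1−α)-quantile computed (with exact weights w) using only the calibration points (X_i,Y_i) with Y_i = y, and define Ĉ_n^{𝒴}(x) = { y ∈ 𝒴 : s(x,y) ≤ η(x,y) }. Then for every y ∈ 𝒴, ℙ( Y ∈ Ĉ_n^{𝒴}(X) | Y = y ) ≥ 1 − α, the probability being over the calibration sample and (X,Y) ∼ P^*. -/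
/-!
Pool the calibration sample and the test point. Since `w = dPs/dPb`, their joint law is that of
`n + 1` i.i.d. points with law `Pb`, reweighted by `w` at the test point; by exchangeability any
index `k` may play the test point (`prod_apply_eq_lintegral_pi`). Averaging over `k` reduces
coverage to a deterministic inequality in each pooled sample: among the points with label `y`,
those covered by the quantile of the others carry at least a fraction `1 - α` of the total weight.

For that inequality, a score fails to be covered iff the normalised weight strictly below it
reaches `1 - α` (`le_wQuantileOn_iff`). The normaliser is the total weight of the pooled sample,
the same for every `k`, so comparing with an uncovered point of smallest score gives the claim
(`covered_weight_ge`).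
-/

open MeasureTheory ProbabilityTheory

open scoped ProbabilityTheory

open Classical in
/-- The class-balanced conformal set `Ĉ_n^{𝒴}(x)` : a label `y` is included iff its score
is at most the weighted quantile computed using only the calibration points with label
`y`. -/
noncomputable def classConformalSet {𝒳 𝒴 : Type*} {n : ℕ} (z : Fin n → 𝒳 × 𝒴)
    (s : 𝒳 × 𝒴 → ℝ) (v : 𝒳 × 𝒴 → ℝ) (α : ℝ) (x : 𝒳) : Set 𝒴 :=
  {y | (s (x, y) : EReal) ≤
    wQuantileOn z (Finset.univ.filter fun i => (z i).2 = y) s v α (x, y)}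

open Finset in
/-- The combinatorial heart: an index is uncovered when the normalised weight strictly below its
score reaches `β`. Everything strictly below an uncovered index of minimal score is covered, so
the covered indices carry at least a fraction `β` of the total weight. -/
lemma covered_weight_ge {K : Type*} [Fintype K] (a σ : K → ℝ) (ha : ∀ k, 0 ≤ a k)
    (β : ℝ) (hβ : β ≤ 1) :
    β * ∑ k, a k ≤
      ∑ k with (∑ j with σ j < σ k, a j) / (∑ j, a j) < β, a k := by
  classical
  set W := ∑ k, a k with hW
  have hW0 : 0 ≤ W := sum_nonneg fun k _ => ha k
  by_cases hF : (univ.filter fun k => ¬ ((∑ j with σ j < σ k, a j) / W < β)).Nonempty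
  · obtain ⟨k, hk, hmin⟩ := exists_min_image _ σ hF
    simp only [mem_filter, mem_univ, true_and, not_lt] at hk hmin
    rcases hW0.eq_or_lt with h0 | hpos
    · rw [← h0, mul_zero]
      exact sum_nonneg fun k _ => ha k
    · refine ((le_div_iff₀ hpos).1 hk).trans ?_
      refine sum_le_sum_of_subset_of_nonneg ?_ fun j _ _ => ha j
      intro j hj
      simp only [mem_filter, mem_univ, true_and] at hj ⊢
      by_contra hc
      exact absurd (hmin j (not_lt.1 hc)) (not_le.2 hj)
  · rw [not_nonempty_iff_eq_empty, filter_eq_empty_iff] at hF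
    rw [filter_true_of_mem fun k hk => not_not.1 (hF hk), ← hW]
    exact mul_le_of_le_one_left hW0 hβ

/-- A score is at most the weighted quantile iff the normalised weight of the calibration points
with strictly smaller score is below `1 - α`. -/
lemma le_wQuantileOn_iff {Z : Type*} {n : ℕ} (z : Fin n → Z) (I : Finset (Fin n))
    (s v : Z → ℝ) (hv : ∀ ζ, 0 ≤ v ζ) (α : ℝ) (ζ : Z) :
    (s ζ : EReal) ≤ wQuantileOn z I s v α ζ ↔
      (∑ i ∈ I.filter (fun i => s (z i) < s ζ), v (z i)) / ((∑ j ∈ I, v (z j)) + v ζ)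
        < 1 - α := by
  classical
  have hW : 0 ≤ (∑ j ∈ I, v (z j)) + v ζ :=
    add_nonneg (Finset.sum_nonneg fun _ _ => hv _) (hv _)
  rw [wQuantileOn, le_sInf_iff]
  simp only [Set.mem_ofPred_eq, ← Finset.sum_div]
  constructor
  · intro h
    by_contra! hc
    -- The threshold `u` is the largest score strictly below `s ζ`, or anything below `s ζ`.
    obtain ⟨u, hu, hsub⟩ : ∃ u : ℝ, u < s ζ ∧ ∀ i ∈ I, s (z i) < s ζ → s (z i) ≤ u := by
      by_cases hne : (I.filter fun i => s (z i) < s ζ).Nonempty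
      · obtain ⟨k, hk, hmax⟩ := Finset.exists_max_image _ (fun i => s (z i)) hne
        exact ⟨s (z k), (Finset.mem_filter.1 hk).2,
          fun i hi hlt => hmax i (Finset.mem_filter.2 ⟨hi, hlt⟩)⟩
      · refine ⟨s ζ - 1, by linarith, fun i hi hlt => ?_⟩
        exact absurd ⟨i, Finset.mem_filter.2 ⟨hi, hlt⟩⟩ hne
    have := h u ⟨u, rfl, hc.trans (div_le_div_of_nonneg_right
      (Finset.sum_le_sum_of_subset_of_nonneg ?_ fun _ _ _ => hv _) hW)⟩
    · exact absurd (EReal.coe_le_coe_iff.1 this) (not_le.2 hu)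
    · intro i hi
      rw [Finset.mem_filter] at hi ⊢
      exact ⟨hi.1, hsub i hi.1 hi.2⟩
  · rintro h _ ⟨u, rfl, hu⟩
    rw [EReal.coe_le_coe_iff]
    by_contra! hc
    refine absurd (hu.trans (div_le_div_of_nonneg_right
      (Finset.sum_le_sum_of_subset_of_nonneg ?_ fun _ _ _ => hv _) hW)) (not_le.2 h)
    intro i hi
    rw [Finset.mem_filter] at hi ⊢
    exact ⟨hi.1, hi.2.trans_lt hc⟩

/-- Change of measure and exchangeability: the law of the calibration sample and the test point
is that of `n + 1` i.i.d. points with law `Pb`, any one of which (index `k`) plays the test point,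
reweighted by `w` at that point. -/
lemma prod_apply_eq_lintegral_pi {Z : Type*} [MeasurableSpace Z]
    (Pb Ps : Measure Z) [IsProbabilityMeasure Pb] [IsProbabilityMeasure Ps] (hac : Ps ≪ Pb)
    (w : Z → ℝ) (hw : ∀ ζ, w ζ = (Ps.rnDeriv Pb ζ).toReal) {n : ℕ} (k : Fin (n + 1))
    {E : Set ((Fin n → Z) × Z)} (hE : MeasurableSet E) :
    ((Measure.pi fun _ : Fin n => Pb).prod Ps) E =
      ∫⁻ z, ENNReal.ofReal (w (z k)) * E.indicator 1 (fun i => z (k.succAbove i), z k)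
        ∂(Measure.pi fun _ : Fin (n + 1) => Pb) := by
  have hwm : Measurable w := by
    rw [show w = fun ζ => (Ps.rnDeriv Pb ζ).toReal from funext hw]
    exact (Measure.measurable_rnDeriv _ _).ennreal_toReal
  have hF : Measurable fun p : Z × (Fin n → Z) =>
      ENNReal.ofReal (w p.1) * E.indicator (1 : (Fin n → Z) × Z → ENNReal) (p.2, p.1) :=
    (hwm.comp measurable_fst).ennreal_ofReal.mul
      ((measurable_one.indicator hE).comp (measurable_snd.prodMk measurable_fst))
  have hmp := measurePreserving_piFinSuccAbove (fun _ : Fin (n + 1) => Pb) k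
  have hae := ofReal_toReal_ae_eq (Measure.rnDeriv_lt_top Ps Pb)
  calc ((Measure.pi fun _ : Fin n => Pb).prod Ps) E
      = ∫⁻ ζ, (Measure.pi fun _ : Fin n => Pb) ((fun z => (z, ζ)) ⁻¹' E) ∂Ps :=
        Measure.prod_apply_symm hE
    _ = ∫⁻ ζ, Ps.rnDeriv Pb ζ * (Measure.pi fun _ : Fin n => Pb) ((fun z => (z, ζ)) ⁻¹' E) ∂Pb :=
        (lintegral_rnDeriv_mul hac (measurable_measure_prodMk_right hE).aemeasurable).symm
    _ = ∫⁻ ζ, ∫⁻ z, ENNReal.ofReal (w ζ) * E.indicator 1 (z, ζ)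
          ∂(Measure.pi fun _ : Fin n => Pb) ∂Pb := by
        refine lintegral_congr_ae ?_
        filter_upwards [hae] with ζ hζ
        have hm : MeasurableSet ((fun z : Fin n → Z => (z, ζ)) ⁻¹' E) :=
          measurable_prodMk_right hE
        rw [lintegral_const_mul' _ _ ENNReal.ofReal_ne_top, hw, hζ]
        congr 1
        rw [← lintegral_indicator_one hm]
        rfl
    _ = ∫⁻ p, ENNReal.ofReal (w p.1) * E.indicator 1 (p.2, p.1)
          ∂(Pb.prod (Measure.pi fun _ : Fin n => Pb)) :=
        (lintegral_prod _ hF.aemeasurable).symm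
    _ = _ := (hmp.lintegral_comp hF).symm

/-- Class-balanced (label-conditional) coverage: with `𝒴` a finite label space, running
weighted conformal prediction (with exact weights `w = dP^*/dP^b`) separately on the
calibration points of each label `y` yields
`ℙ(Y ∈ Ĉ_n^𝒴(X) | Y = y) ≥ 1 − α` for every label `y`. -/
theorem class_balanced_conformal_coverage
    {𝒳 𝒴 : Type*} [MeasurableSpace 𝒳] [StandardBorelSpace 𝒳]
    [Fintype 𝒴] [MeasurableSpace 𝒴] [MeasurableSingletonClass 𝒴]
    (Pb Ps : Measure (𝒳 × 𝒴)) [IsProbabilityMeasure Pb] [IsProbabilityMeasure Ps]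
    (hac : Ps ≪ Pb)
    (w : 𝒳 × 𝒴 → ℝ) (hw : ∀ ζ, w ζ = (Ps.rnDeriv Pb ζ).toReal)
    (s : 𝒳 × 𝒴 → ℝ) (hs : Measurable s)
    (α : ℝ) (hα : α ∈ Set.Ioo (0 : ℝ) 1)
    (hALL : ∀ y : 𝒴, 0 < Ps {ζ : 𝒳 × 𝒴 | ζ.2 = y})
    (n : ℕ) (y : 𝒴) :
    ENNReal.ofReal (1 - α) ≤
      (((Measure.pi fun _ : Fin n => Pb).prod Ps)[|
          {ω : (Fin n → 𝒳 × 𝒴) × (𝒳 × 𝒴) | ω.2.2 = y}])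
        {ω : (Fin n → 𝒳 × 𝒴) × (𝒳 × 𝒴) |
          ω.2.2 ∈ classConformalSet ω.1 s w α ω.2.1} := by
  classical
  have hw0 : ∀ ζ, 0 ≤ w ζ := fun ζ => by rw [hw]; exact ENNReal.toReal_nonneg
  have hwm : Measurable w := by
    rw [show w = fun ζ => (Ps.rnDeriv Pb ζ).toReal from funext hw]
    exact (Measure.measurable_rnDeriv _ _).ennreal_toReal
  -- Weights vanishing off the label `y` turn sums over the `y`-labelled points into full sums.
  set a : 𝒳 × 𝒴 → ℝ := fun ζ => if ζ.2 = y then w ζ else 0 with ha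
  have hy : MeasurableSet {ζ : 𝒳 × 𝒴 | ζ.2 = y} := measurable_snd (measurableSet_singleton y)
  have ham : Measurable a := Measurable.ite hy hwm measurable_const
  have ha0 : ∀ ζ, 0 ≤ a ζ := fun ζ => by
    simp only [ha]; split_ifs
    exacts [hw0 ζ, le_rfl]
  set A : Set ((Fin n → 𝒳 × 𝒴) × (𝒳 × 𝒴)) := {ω | ω.2.2 = y} with hA
  set B : Set ((Fin n → 𝒳 × 𝒴) × (𝒳 × 𝒴)) :=
    {ω | (∑ i, if s (ω.1 i) < s ω.2 then a (ω.1 i) else 0) / ((∑ i, a (ω.1 i)) + a ω.2)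
      < 1 - α} with hB
  have hAm : MeasurableSet A := measurable_snd hy
  have hev : ∀ i : Fin n, Measurable fun ω : (Fin n → 𝒳 × 𝒴) × (𝒳 × 𝒴) => ω.1 i :=
    fun i => (measurable_pi_apply i).comp measurable_fst
  have hBm : MeasurableSet B := by
    refine measurableSet_lt (Measurable.div ?_ ?_) measurable_const
    · exact Finset.measurable_sum _ fun i _ => Measurable.ite
        (measurableSet_lt (hs.comp (hev i)) (hs.comp measurable_snd))
        (ham.comp (hev i)) measurable_const
    · exact (Finset.measurable_sum _ fun i _ => ham.comp (hev i)).add (ham.comp measurable_snd)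
  have hAB : A ∩ {ω | ω.2.2 ∈ classConformalSet ω.1 s w α ω.2.1} = A ∩ B := by
    ext ⟨z, ζ⟩
    simp only [Set.mem_inter_iff, and_congr_right_iff]
    intro (hζ : ζ.2 = y)
    simp only [hB, classConformalSet, Set.mem_ofPred_eq, Prod.mk.eta]
    rw [le_wQuantileOn_iff _ _ _ _ hw0]
    simp only [ha, hζ, if_true, Finset.filter_filter, Finset.sum_filter, ← ite_and, and_comm]
  -- In a pooled sample of `n + 1` points, covering the held-out point `k` is the condition of
  -- `covered_weight_ge` at `k`.
  have key : ∀ z : Fin (n + 1) → 𝒳 × 𝒴,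
      ENNReal.ofReal (1 - α) *
        ∑ k, ENNReal.ofReal (w (z k)) * A.indicator 1 (fun i => z (k.succAbove i), z k) ≤
      ∑ k, ENNReal.ofReal (w (z k)) * (A ∩ B).indicator 1 (fun i => z (k.succAbove i), z k) := by
    intro z
    have h1 : ∀ k, ENNReal.ofReal (w (z k)) *
        A.indicator 1 (fun i => z (k.succAbove i), z k) = ENNReal.ofReal (a (z k)) := by
      intro k
      by_cases h : (z k).2 = y <;> simp [hA, ha, h]
    have h2 : ∀ k, ENNReal.ofReal (w (z k)) *
        (A ∩ B).indicator 1 (fun i => z (k.succAbove i), z k) =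
        ENNReal.ofReal (if (∑ j with s (z j) < s (z k), a (z j)) / (∑ j, a (z j)) < 1 - α
          then a (z k) else 0) := by
      intro k
      have hmem : ((fun i => z (k.succAbove i), z k) : (Fin n → 𝒳 × 𝒴) × (𝒳 × 𝒴)) ∈ B ↔
          (∑ j with s (z j) < s (z k), a (z j)) / (∑ j, a (z j)) < 1 - α := by
        rw [Finset.sum_filter, Fin.sum_univ_succAbove _ k,
          Fin.sum_univ_succAbove (fun j => a (z j)) k]
        simp [hB, add_comm]
      rw [← Set.indicator_indicator, ← if_congr hmem rfl rfl]
      by_cases h : (z k).2 = y <;>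
      by_cases h' : ((fun i => z (k.succAbove i), z k) : (Fin n → 𝒳 × 𝒴) × (𝒳 × 𝒴)) ∈ B <;>
        simp [hA, ha, h, h']
    simp only [h1, h2]
    rw [← ENNReal.ofReal_sum_of_nonneg fun k _ => ha0 _,
      ← ENNReal.ofReal_sum_of_nonneg fun k _ => by split_ifs; exacts [ha0 _, le_rfl],
      ← ENNReal.ofReal_mul (by linarith [hα.2])]
    refine ENNReal.ofReal_le_ofReal ((covered_weight_ge (fun k => a (z k)) (fun k => s (z k))
      (fun k => ha0 _) (1 - α) (by linarith [hα.1])).trans_eq ?_)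
    exact Finset.sum_filter _ _
  have hmeas : ∀ {E : Set ((Fin n → 𝒳 × 𝒴) × (𝒳 × 𝒴))}, MeasurableSet E → ∀ k : Fin (n + 1),
      Measurable fun z : Fin (n + 1) → 𝒳 × 𝒴 => ENNReal.ofReal (w (z k)) *
        E.indicator (1 : (Fin n → 𝒳 × 𝒴) × (𝒳 × 𝒴) → ENNReal) (fun i => z (k.succAbove i), z k) := by
    intro E hE k
    refine (hwm.comp (measurable_pi_apply k)).ennreal_ofReal.mul
      ((measurable_one.indicator hE).comp (Measurable.prodMk ?_ (measurable_pi_apply k)))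
    exact measurable_pi_lambda _ fun i => measurable_pi_apply _
  set μ := (Measure.pi fun _ : Fin n => Pb).prod Ps with hμ
  have hsum : ∀ {E : Set ((Fin n → 𝒳 × 𝒴) × (𝒳 × 𝒴))}, MeasurableSet E →
      ∫⁻ z, ∑ k, ENNReal.ofReal (w (z k)) * E.indicator 1 (fun i => z (k.succAbove i), z k)
        ∂(Measure.pi fun _ : Fin (n + 1) => Pb) = ((n + 1 : ℕ) : ENNReal) * μ E := by
    intro E hE
    rw [lintegral_finsetSum _ fun k _ => hmeas hE k]
    simp only [← prod_apply_eq_lintegral_pi Pb Ps hac w hw _ hE]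
    simp [hμ]
  have hint := lintegral_mono (μ := Measure.pi fun _ : Fin (n + 1) => Pb) key
  rw [lintegral_const_mul' _ _ ENNReal.ofReal_ne_top, hsum hAm, hsum (hAm.inter hBm),
    mul_left_comm] at hint
  have hfin := (ENNReal.mul_le_mul_iff_right (by simp) (by simp)).1 hint
  have hμA : μ A ≠ 0 := by
    have : A = Set.univ ×ˢ {ζ : 𝒳 × 𝒴 | ζ.2 = y} := by ext; simp [hA]
    rw [this, hμ, Measure.prod_prod, measure_univ, one_mul]
    exact (hALL y).ne'
  rw [cond_apply hAm, hAB, mul_comm, ← div_eq_mul_inv,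
    ENNReal.le_div_iff_mul_le (Or.inl hμA) (Or.inl (measure_ne_top _ _))]
  exact hfin
end

section
/- Let W_1,…,W_n be i.i.d. nonnegative real random variables with E[W_1] = 1 and (E[W_1^r])^{1/r} ≤ M_r < ∞ for some r ≥ 2, and let W̃ be a nonnegative random variable independent of (W_1,…,W_n) with E[W̃] ≤ M_r². Then E[ max{ W̃, max_{1≤i≤n} W_i } / ( W̃ + ∑_{i=1}^n W_i ) ] ≤ (2/n)( M_r² + n^{1/r} M_r ) + 16 M_r² / n, where the ratio is interpreted as 0 when the denominator is 0. -/
/-!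
Write `S = ∑ Wᵢ` and `R` for the ratio.  Almost surely everything is nonnegative and `R ≤ 1`.
If `S ≥ n/2` then `R ≤ (2/n) (W̃ + max Wᵢ)`; if `S < n/2` then `1 ≤ (4/n²) (S - n)²`.  Hence
`R ≤ (2/n) (W̃ + max Wᵢ) + (4/n²) (S - n)²` holds pointwise, and expectations can be taken.
The last term contributes `(4/n²) Var S = (4/n) Var W₁ ≤ 4 M_r²/n`.

The moment comparisons `E[max Wᵢ] ≤ n^{1/r} M_r` and `E[W₁²] ≤ M_r²` both come from the tangent
line of a power function (`rpow_le_tangent`), i.e. Jensen's inequality in pointwise form.  With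
`a = n^{1/r} M_r` it gives `max Wᵢ ≤ a (1 + (∑ Wᵢ^r / a^r - 1) / r)`, whose mean is at most `a`
because `E[∑ Wᵢ^r] ≤ n M_r^r = a^r`.
-/

open MeasureTheory

/-- Bernoulli's inequality, rescaled: `x ^ p` as a function of `x ^ r` is concave for `p ≤ r`, so it
lies below its tangent at `x = a`. -/
lemma rpow_le_tangent {x a p r : ℝ} (hx : 0 ≤ x) (ha : 0 < a) (hp : 0 < p) (hpr : p ≤ r) :
    x ^ p ≤ a ^ p * (1 + p / r * (x ^ r / a ^ r - 1)) := by
  have hr : 0 < r := hp.trans_le hpr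
  have ht : 0 ≤ (x / a) ^ p := by positivity
  have h := one_add_mul_self_le_rpow_one_add (s := (x / a) ^ p - 1) (by linarith)
    (p := r / p) ((one_le_div hp).2 hpr)
  rw [add_sub_cancel, ← Real.rpow_mul (by positivity), mul_div_cancel₀ _ hp.ne',
    Real.div_rpow hx ha.le, Real.div_rpow hx ha.le] at h
  have hap : 0 < a ^ p := by positivity
  have h2 : x ^ p / a ^ p ≤ 1 + p / r * (x ^ r / a ^ r - 1) := by
    have h3 := mul_le_mul_of_nonneg_left h (by positivity : 0 ≤ p / r)
    have h4 : p / r * (1 + r / p * (x ^ p / a ^ p - 1)) = p / r + (x ^ p / a ^ p - 1) := by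
      field_simp
    linarith
  rwa [div_le_iff₀' hap] at h2

lemma ratio_le_pointwise {n : ℕ} (hn : 0 < n) {m t S : ℝ} (hm : 0 ≤ m) (ht : 0 ≤ t)
    (hmS : m ≤ S) :
    max t m / (t + S) ≤ 2 / n * (t + m) + 4 / (n : ℝ) ^ 2 * (S - n) ^ 2 := by
  have hn' : (0 : ℝ) < n := by exact_mod_cast hn
  have hmax : max t m ≤ t + m := max_le (by linarith) (by linarith)
  rcases le_total ((n : ℝ) / 2) S with h | h
  · have h1 : max t m / (t + S) ≤ (t + m) / (n / 2) := by
      gcongr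
      linarith
    have h2 : (t + m) / ((n : ℝ) / 2) = 2 / n * (t + m) := by field_simp
    have h3 : 0 ≤ 4 / (n : ℝ) ^ 2 * (S - n) ^ 2 := by positivity
    linarith
  · have h1 : max t m / (t + S) ≤ 1 :=
      div_le_one_of_le₀ (max_le (by linarith) (by linarith)) (by linarith)
    have h2 : 1 ≤ 4 / (n : ℝ) ^ 2 * (S - n) ^ 2 := by
      rw [div_mul_eq_mul_div, one_le_div (by positivity)]
      nlinarith
    have h3 : 0 ≤ 2 / (n : ℝ) * (t + m) := by positivity
    linarith

section Moments

variable {ν : Measure ℝ} {r Mr : ℝ}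

lemma integral_rpow_le (hnonneg : ∀ᵐ x ∂ν, 0 ≤ x) (hr : 2 ≤ r)
    (hMr : (∫ x, x ^ r ∂ν) ^ (1 / r) ≤ Mr) : ∫ x, x ^ r ∂ν ≤ Mr ^ r := by
  have h0 : 0 ≤ ∫ x, x ^ r ∂ν :=
    integral_nonneg_of_ae (by filter_upwards [hnonneg] with x hx using Real.rpow_nonneg hx r)
  have h := Real.rpow_le_rpow (by positivity) hMr (by linarith : 0 ≤ r)
  rwa [← Real.rpow_mul h0, one_div_mul_cancel (by linarith), Real.rpow_one] at h

variable [IsProbabilityMeasure ν]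

lemma one_le_moment (hnonneg : ∀ᵐ x ∂ν, 0 ≤ x) (hmean : ∫ x, x ∂ν = 1) (hr : 2 ≤ r)
    (hint : Integrable (fun x => x ^ r) ν)
    (hMr : (∫ x, x ^ r ∂ν) ^ (1 / r) ≤ Mr) : 1 ≤ Mr := by
  have hle : ∫ x, x ∂ν ≤ ∫ x, (1 + 1 / r * (x ^ r - 1)) ∂ν := by
    refine integral_mono_of_nonneg hnonneg (by fun_prop) ?_
    filter_upwards [hnonneg] with x hx
    simpa using rpow_le_tangent hx one_pos one_pos (by linarith : 1 ≤ r)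
  rw [integral_add (by fun_prop) (by fun_prop), integral_const_mul,
    integral_sub hint (by fun_prop), hmean] at hle
  simp only [integral_const, probReal_univ, smul_eq_mul, one_mul] at hle
  have hr0 : 0 < 1 / r := by positivity
  have h1 : 1 ≤ ∫ x, x ^ r ∂ν := by
    by_contra! hlt
    nlinarith
  exact (Real.one_le_rpow h1 hr0.le).trans hMr

lemma memLp_two_and_integral_sq_le (hnonneg : ∀ᵐ x ∂ν, 0 ≤ x) (hmean : ∫ x, x ∂ν = 1)
    (hr : 2 ≤ r) (hint : Integrable (fun x => x ^ r) ν)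
    (hMr : (∫ x, x ^ r ∂ν) ^ (1 / r) ≤ Mr) :
    MemLp (fun x : ℝ => x) 2 ν ∧ ∫ x, x ^ 2 ∂ν ≤ Mr ^ 2 := by
  have hM : 0 < Mr := one_pos.trans_le (one_le_moment hnonneg hmean hr hint hMr)
  have hI := integral_rpow_le hnonneg hr hMr
  have hpt : ∀ᵐ x ∂ν, x ^ 2 ≤ Mr ^ 2 * (1 + 2 / r * (x ^ r / Mr ^ r - 1)) := by
    filter_upwards [hnonneg] with x hx
    simpa using rpow_le_tangent hx hM two_pos hr
  have hintG : Integrable (fun x => Mr ^ 2 * (1 + 2 / r * (x ^ r / Mr ^ r - 1))) ν := by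
    fun_prop
  refine ⟨(memLp_two_iff_integrable_sq (by fun_prop)).2 (hintG.mono' (by fun_prop) ?_), ?_⟩
  · filter_upwards [hpt] with x hx
    rwa [Real.norm_of_nonneg (sq_nonneg x)]
  · refine (integral_mono_of_nonneg (ae_of_all _ fun x => sq_nonneg x) hintG hpt).trans ?_
    rw [integral_const_mul, integral_add (by fun_prop) (by fun_prop), integral_const_mul,
      integral_sub (by fun_prop) (by fun_prop), integral_div]
    simp only [integral_const, probReal_univ, smul_eq_mul, one_mul]
    have h1 : (∫ x, x ^ r ∂ν) / Mr ^ r ≤ 1 := div_le_one_of_le₀ hI (by positivity)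
    have h2 : 2 / r * ((∫ x, x ^ r ∂ν) / Mr ^ r - 1) ≤ 0 :=
      mul_nonpos_of_nonneg_of_nonpos (by positivity) (by linarith)
    nlinarith [sq_nonneg Mr]

lemma integral_sum_sub_sq_le (n : ℕ) (hmean : ∫ x, x ∂ν = 1)
    (hL : MemLp (fun x : ℝ => x) 2 ν) (hsq : ∫ x, x ^ 2 ∂ν ≤ Mr ^ 2) :
    ∫ w : Fin n → ℝ, (∑ i, w i - n) ^ 2 ∂(Measure.pi fun _ : Fin n => ν) ≤ n * Mr ^ 2 := by
  have hvar := ProbabilityTheory.variance_sum_pi (ι := Fin n) (μ := fun _ => ν)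
    (X := fun _ x => x) (fun _ => hL)
  have hE : ∫ w : Fin n → ℝ, (∑ i, w i) ∂(Measure.pi fun _ : Fin n => ν) = n := by
    rw [integral_finsetSum _ fun i _ =>
      integrable_comp_eval (μ := fun _ : Fin n => ν) (i := i) (hL.integrable one_le_two)]
    have h : ∀ i : Fin n, ∫ w : Fin n → ℝ, w i ∂(Measure.pi fun _ : Fin n => ν) = 1 := fun i => by
      rw [integral_comp_eval (μ := fun _ : Fin n => ν) (i := i) (f := fun x : ℝ => x)
        hL.aestronglyMeasurable, hmean]
    simp [h]
  have hfun : (∑ i : Fin n, fun w : Fin n → ℝ => w i) = fun w => ∑ i, w i := by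
    ext w
    simp
  rw [hfun, ProbabilityTheory.variance_eq_integral (by fun_prop), hE] at hvar
  rw [hvar, Finset.sum_const, Finset.card_univ, Fintype.card_fin, nsmul_eq_mul]
  gcongr
  exact (ProbabilityTheory.variance_le_expectation_sq hL.aestronglyMeasurable).trans hsq

end Moments

/-- If `W_1, …, W_n` are i.i.d. nonnegative with mean `1` and `(E[W^r])^{1/r} ≤ M_r` for
some `r ≥ 2`, and `W̃ ≥ 0` is independent of them with `E[W̃] ≤ M_r²`, then
`E[ max{W̃, max_i W_i} / (W̃ + ∑_i W_i) ] ≤ (2/n)(M_r² + n^{1/r} M_r) + 16 M_r²/n`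
(the ratio being `0` when the denominator vanishes).  Everything is canonically realized
on the product space `(Fin n → ℝ) × ℝ` with law `ν^{⊗n} ⊗ ν̃`. -/
theorem max_weight_ratio_expectation_bound
    (n : ℕ) (hn : 0 < n) (ν νt : Measure ℝ)
    [IsProbabilityMeasure ν] [IsProbabilityMeasure νt]
    (hnonneg : ∀ᵐ x ∂ν, 0 ≤ x) (hnonneg' : ∀ᵐ x ∂νt, 0 ≤ x)
    (hmean : ∫ x, x ∂ν = 1)
    (r Mr : ℝ) (hr : 2 ≤ r)
    (hint : Integrable (fun x => x ^ r) ν)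
    (hMr : (∫ x, x ^ r ∂ν) ^ (1 / r) ≤ Mr)
    (htint : Integrable (fun x => x) νt)
    (htmean : ∫ x, x ∂νt ≤ Mr ^ 2) :
    ∫ p : (Fin n → ℝ) × ℝ,
        max p.2 (Finset.univ.sup' (Finset.univ_nonempty_iff.mpr ⟨⟨0, hn⟩⟩) p.1) /
          (p.2 + ∑ i, p.1 i)
      ∂((Measure.pi fun _ : Fin n => ν).prod νt)
      ≤ (2 / n) * (Mr ^ 2 + (n : ℝ) ^ (1 / r) * Mr) + 16 * Mr ^ 2 / n := by
  have hn' : (0 : ℝ) < n := by exact_mod_cast hn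
  have hM : 0 < Mr := one_pos.trans_le (one_le_moment hnonneg hmean hr hint hMr)
  have hI := integral_rpow_le hnonneg hr hMr
  obtain ⟨hL, hsq⟩ := memLp_two_and_integral_sq_le hnonneg hmean hr hint hMr
  set a : ℝ := (n : ℝ) ^ (1 / r) * Mr with ha_def
  have ha : 0 < a := by positivity
  have har : a ^ r = n * Mr ^ r := by
    rw [ha_def, Real.mul_rpow (by positivity) hM.le, ← Real.rpow_mul hn'.le,
      one_div_mul_cancel (by linarith), Real.rpow_one]
  set P : Measure (Fin n → ℝ) := Measure.pi fun _ : Fin n => ν with hP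
  -- The two parts of the pointwise bound that depend on the `W_i` only.
  let F : (Fin n → ℝ) → ℝ := fun w => a * (1 + 1 / r * ((∑ i, w i ^ r) / a ^ r - 1))
  let V : (Fin n → ℝ) → ℝ := fun w => (∑ i, w i - n) ^ 2
  have hri : ∀ i : Fin n, Integrable (fun w : Fin n → ℝ => w i ^ r) P := fun i =>
    integrable_comp_eval (μ := fun _ : Fin n => ν) (i := i) (f := fun x : ℝ => x ^ r) hint
  have hsumI : Integrable (fun w : Fin n → ℝ => ∑ i, w i ^ r) P :=
    integrable_finsetSum _ fun i _ => hri i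
  have hsumE : ∫ w, (∑ i, w i ^ r) ∂P = n * ∫ x, x ^ r ∂ν := by
    rw [integral_finsetSum _ fun i _ => hri i]
    have h : ∀ i : Fin n, ∫ w : Fin n → ℝ, w i ^ r ∂P = ∫ x, x ^ r ∂ν := fun i =>
      integral_comp_eval (μ := fun _ : Fin n => ν) (i := i) (f := fun x : ℝ => x ^ r)
        hint.aestronglyMeasurable
    simp [h]
  have hFint : Integrable F P := by
    dsimp only [F]
    fun_prop
  have hFE : ∫ w, F w ∂P ≤ a := by
    dsimp only [F]
    rw [integral_const_mul, integral_add (by fun_prop) (by fun_prop), integral_const_mul,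
      integral_sub (by fun_prop) (by fun_prop), integral_div, hsumE]
    simp only [integral_const, probReal_univ, smul_eq_mul, one_mul]
    have h1 : (n * ∫ x, x ^ r ∂ν) / a ^ r ≤ 1 := by
      refine div_le_one_of_le₀ ?_ (by positivity)
      rw [har]
      gcongr
    have h2 : 1 / r * ((n * ∫ x, x ^ r ∂ν) / a ^ r - 1) ≤ 0 :=
      mul_nonpos_of_nonneg_of_nonpos (by positivity) (by linarith)
    nlinarith
  have hVint : Integrable V P := by
    have h : MemLp (fun w : Fin n → ℝ => ∑ i, w i - (n : ℝ)) 2 P :=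
      (memLp_finsetSum _ fun i _ =>
        hL.comp_measurePreserving (measurePreserving_eval (fun _ : Fin n => ν) i)).sub
        (memLp_const _)
    exact h.integrable_sq
  have hVE : ∫ w, V w ∂P ≤ n * Mr ^ 2 := integral_sum_sub_sq_le n hmean hL hsq
  have hae1 : ∀ᵐ p ∂(P.prod νt), ∀ i, 0 ≤ p.1 i := by
    refine Measure.quasiMeasurePreserving_fst.ae (p := fun w : Fin n → ℝ => ∀ i, 0 ≤ w i) ?_
    rw [ae_all_iff]
    exact fun i => (measurePreserving_eval (fun _ : Fin n => ν) i).quasiMeasurePreserving.ae hnonneg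
  have hae2 : ∀ᵐ p ∂(P.prod νt), 0 ≤ p.2 := Measure.quasiMeasurePreserving_snd.ae hnonneg'
  have i1 : Integrable (fun p : (Fin n → ℝ) × ℝ => F p.1) (P.prod νt) := hFint.comp_fst νt
  have i2 : Integrable (fun p : (Fin n → ℝ) × ℝ => V p.1) (P.prod νt) := hVint.comp_fst νt
  have i3 : Integrable (fun p : (Fin n → ℝ) × ℝ => p.2) (P.prod νt) := htint.comp_snd P
  have hmain : ∫ p : (Fin n → ℝ) × ℝ,
        max p.2 (Finset.univ.sup' (Finset.univ_nonempty_iff.mpr ⟨⟨0, hn⟩⟩) p.1) /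
          (p.2 + ∑ i, p.1 i) ∂(P.prod νt) ≤
      ∫ p : (Fin n → ℝ) × ℝ, (2 / n * (p.2 + F p.1) + 4 / (n : ℝ) ^ 2 * V p.1) ∂(P.prod νt) := by
    refine integral_mono_of_nonneg ?_ (((i3.add i1).const_mul _).add (i2.const_mul _)) ?_
    · filter_upwards [hae1, hae2] with p h1 h2
      exact div_nonneg (le_max_of_le_left h2) (add_nonneg h2 (Finset.sum_nonneg fun i _ => h1 i))
    · filter_upwards [hae1, hae2] with p h1 h2
      obtain ⟨j, -, hj⟩ := Finset.exists_mem_eq_sup' (Finset.univ_nonempty_iff.mpr ⟨⟨0, hn⟩⟩) p.1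
      rw [hj]
      have hS : p.1 j ≤ ∑ i, p.1 i :=
        Finset.single_le_sum (fun i _ => h1 i) (Finset.mem_univ j)
      have hF : p.1 j ≤ F p.1 := by
        have h := rpow_le_tangent (h1 j) ha one_pos (by linarith : 1 ≤ r)
        rw [Real.rpow_one, Real.rpow_one] at h
        refine h.trans ?_
        have hSr : p.1 j ^ r ≤ ∑ i, p.1 i ^ r :=
          Finset.single_le_sum (f := fun i => p.1 i ^ r)
            (fun i _ => Real.rpow_nonneg (h1 i) r) (Finset.mem_univ j)
        dsimp only [F]
        gcongr
      refine (ratio_le_pointwise hn (h1 j) h2 hS).trans ?_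
      dsimp only [V]
      gcongr
  refine hmain.trans ?_
  have e1 : ∫ p : (Fin n → ℝ) × ℝ, F p.1 ∂(P.prod νt) = ∫ w, F w ∂P := by
    simp [integral_fun_fst]
  have e2 : ∫ p : (Fin n → ℝ) × ℝ, V p.1 ∂(P.prod νt) = ∫ w, V w ∂P := by
    simp [integral_fun_fst]
  have e3 : ∫ p : (Fin n → ℝ) × ℝ, p.2 ∂(P.prod νt) = ∫ x, x ∂νt := by
    simpa using integral_fun_snd (μ := P) (ν := νt) (fun x : ℝ => x)
  rw [integral_add (by exact (i3.add i1).const_mul _) (i2.const_mul _), integral_const_mul,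
    integral_const_mul, integral_add i3 i1, e1, e2, e3]
  have hlast : 4 / (n : ℝ) ^ 2 * (n * Mr ^ 2) ≤ 16 * Mr ^ 2 / n := by
    have h : 4 / (n : ℝ) ^ 2 * (n * Mr ^ 2) = 4 * Mr ^ 2 / n := by field_simp
    rw [h]
    gcongr
    norm_num
  refine add_le_add ?_ (le_trans ?_ hlast)
  · gcongr
  · gcongr
end

section
/- Fix K > 0, x ≥ 1 and a ∈ ℝ with |a| < K, and let p(·|x,a) be the density of the normal distribution with mean (Kx² + a)^{1/2} and variance Kx² − a. Then ∫_ℝ y² p(y|x,a) dy = 2Kx², a value independent of a. Consequently, p̂(y|x,a) := y² p(y|x,a)/(2Kx²) is a probability density in y for every such (x,a), p̂ ≠ p as functions, and for any policies π^*, π^b the weight functions computed from p̂ and from p coincide: ( ∫ p̂(y|x,a) π^*(a|x) μ(da) ) / ( ∫ p̂(y|x,a) π^b(a|x) μ(da) ) = ( ∫ p(y|x,a) π^*(a|x) μ(da) ) / ( ∫ p(y|x,a) π^b(a|x) μ(da) ) whenever the denominators are positive and finite. Hence a consistent estimate of the weights w(x,y) does not imply a consistent estimate of p(y|x,a). -/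
/-!
The second moment of `𝒩(m, v)` is `m² + v`; with `m² = Kx² + a` and `v = Kx² − a` the action
cancels and leaves `2Kx²` (`integral_sq_mul_normalPDF`, read off from the mean and variance of
Mathlib's `gaussianReal`). Hence `p̂` integrates to one. It differs from `p` at `y = 0`, where it
vanishes while `p` is positive. For fixed `x` and `y` the ratio `p̂ / p = y² / (2Kx²)` does not
depend on `a`, so it factors out of the numerator and denominator of the weight and cancels; the
positivity of the denominator forces `y ≠ 0`.
-/

open MeasureTheory

/-- Density of the normal distribution with mean `m` and variance `v`. -/
noncomputable def normalPDF (m v y : ℝ) : ℝ :=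
  (Real.sqrt (2 * Real.pi * v))⁻¹ * Real.exp (-(y - m) ^ 2 / (2 * v))

/-- The conditional outcome density `p(y|x,a)` of `Y | x, a ∼ 𝒩((Kx²+a)^{1/2}, Kx²−a)`. -/
noncomputable def pDens (K x a y : ℝ) : ℝ :=
  normalPDF (Real.sqrt (K * x ^ 2 + a)) (K * x ^ 2 - a) y

/-- The modified density `p̂(y|x,a) = y² p(y|x,a) / (2Kx²)`. -/
noncomputable def pHat (K x a y : ℝ) : ℝ :=
  y ^ 2 * pDens K x a y / (2 * K * x ^ 2)

theorem normalPDF_eq_gaussianPDFReal (m : ℝ) (v : NNReal) :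
    normalPDF m v = ProbabilityTheory.gaussianPDFReal m v := by
  ext y
  simp [normalPDF, ProbabilityTheory.gaussianPDFReal]

theorem integral_sq_mul_normalPDF (m v : ℝ) (hv : 0 < v) :
    ∫ y, y ^ 2 * normalPDF m v y = m ^ 2 + v := by
  lift v to NNReal using hv.le
  have hv0 : v ≠ 0 := by
    rintro rfl
    simp at hv
  have h1 := ProbabilityTheory.integral_gaussianReal_eq_integral_smul (μ := m) hv0
    (f := fun y : ℝ => y ^ 2)
  have h2 := ProbabilityTheory.variance_eq_sub
    (ProbabilityTheory.memLp_id_gaussianReal (μ := m) (v := v) 2)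
  rw [ProbabilityTheory.variance_id_gaussianReal] at h2
  simp only [Pi.pow_apply, id_eq, ProbabilityTheory.integral_id_gaussianReal] at h2
  simp only [smul_eq_mul] at h1
  rw [normalPDF_eq_gaussianPDFReal m v]
  simp_rw [mul_comm (_ ^ 2)]
  rw [← h1]
  linarith

theorem pos_of_abs_lt {K x a : ℝ} (hx : 1 ≤ x) (ha : |a| < K) :
    0 < K * x ^ 2 + a ∧ 0 < K * x ^ 2 - a := by
  obtain ⟨h1, h2⟩ := abs_lt.mp ha
  have hK : 0 < K := (abs_nonneg a).trans_lt ha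
  have : K * 1 ≤ K * x ^ 2 := mul_le_mul_of_nonneg_left (one_le_pow₀ hx) hK.le
  constructor <;> linarith

theorem integral_sq_mul_pDens {K x a : ℝ} (hx : 1 ≤ x) (ha : |a| < K) :
    ∫ y, y ^ 2 * pDens K x a y = 2 * K * x ^ 2 := by
  obtain ⟨h1, h2⟩ := pos_of_abs_lt hx ha
  simp only [pDens]
  rw [integral_sq_mul_normalPDF _ _ h2, Real.sq_sqrt h1.le]
  ring

/-- Counter-example: for `Y | x,a ∼ 𝒩((Kx²+a)^{1/2}, Kx²−a)` with `K > 0`, `x ≥ 1` and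
`|a| < K`, the second moment `∫ y² p(y|x,a) dy = 2Kx²` does not depend on `a`; hence
`p̂(y|x,a) = y² p(y|x,a)/(2Kx²)` is a probability density, `p̂ ≠ p`, yet `p̂` and `p`
induce exactly the same weight functions for any pair of policies.  Thus consistent
estimation of the weights `w(x,y)` does not imply consistent estimation of `p(y|x,a)`. -/
theorem normal_second_moment_counterexample (K x : ℝ) (hK : 0 < K) (hx : 1 ≤ x) :
    (∀ a : ℝ, |a| < K → ∫ y, y ^ 2 * pDens K x a y = 2 * K * x ^ 2) ∧
    (∀ a : ℝ, |a| < K → ∫ y, pHat K x a y = 1) ∧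
    (∀ a : ℝ, |a| < K → pHat K x a ≠ pDens K x a) ∧
    (∀ (μ : Measure ℝ) [SigmaFinite μ] (πs πb : ℝ → ℝ) (y : ℝ),
      (∀ᵐ a ∂μ, |a| < K) →
      0 < ∫ a, pDens K x a y * πb a ∂μ →
      0 < ∫ a, pHat K x a y * πb a ∂μ →
      (∫ a, pHat K x a y * πs a ∂μ) / (∫ a, pHat K x a y * πb a ∂μ)
        = (∫ a, pDens K x a y * πs a ∂μ) / (∫ a, pDens K x a y * πb a ∂μ)) := by
  have hc : 0 < 2 * K * x ^ 2 := by positivity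
  refine ⟨fun a ha => integral_sq_mul_pDens hx ha, fun a ha => ?_, fun a ha h => ?_, ?_⟩
  · simp only [pHat]
    rw [integral_div, integral_sq_mul_pDens hx ha, div_self hc.ne']
  · have h2 := (pos_of_abs_lt hx ha).2
    have h0 := congrFun h 0
    have hp : 0 < pDens K x a 0 := by
      unfold pDens normalPDF
      positivity
    simp only [pHat] at h0
    norm_num at h0
    exact hp.ne h0
  · intro μ _ πs πb y _ _ hb
    have key : ∀ f : ℝ → ℝ, ∫ a, pHat K x a y * f a ∂μ
        = y ^ 2 / (2 * K * x ^ 2) * ∫ a, pDens K x a y * f a ∂μ := by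
      intro f
      rw [← integral_const_mul]
      congr 1
      ext a
      simp only [pHat]
      ring
    rw [key] at hb
    rw [key, key, mul_div_mul_left _ _ (left_ne_zero_of_mul hb.ne')]
end
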